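/- arXiv:1507.03099 — 2 statements merged into one kernel-verified Lean document; each statement's English description precedes it below -/
import Mathlib

section
/- For every integer n ≥ 0, 3·A_3(n) = σ(3n+2), where σ(m) denotes the sum of the positive divisors of m. -/
/-- The hook length of the cell `(i, j)` in a Young diagram `μ`:
arm length + leg length + 1. -/
def YoungDiagram.hookLength (μ : YoungDiagram) (i j : ℕ) : ℕ :=
  μ.rowLen i + μ.colLen j - i - j - 1

/-- A Young diagram (equivalently, a partition) is a 3-core if none of its
hook numbers is divisible by 3. -/
def YoungDiagram.IsThreeCore (μ : YoungDiagram) : Prop :=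
  ∀ c ∈ μ.cells, ¬ (3 ∣ μ.hookLength c.1 c.2)

/-- `a3 n` is the number of 3-core partitions of `n`. -/
noncomputable def a3 (n : ℕ) : ℕ :=
  Nat.card {μ : YoungDiagram // μ.card = n ∧ μ.IsThreeCore}

/-- `A3 n` is the number of partition pairs of `n` in which each partition is a 3-core. -/
noncomputable def A3 (n : ℕ) : ℕ :=
  Nat.card {p : YoungDiagram × YoungDiagram //
    p.1.card + p.2.card = n ∧ p.1.IsThreeCore ∧ p.2.IsThreeCore}

/-- `B3 n` is the number of partition triples of `n` in which each partition is a 3-core. -/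
noncomputable def B3 (n : ℕ) : ℕ :=
  Nat.card {p : YoungDiagram × YoungDiagram × YoungDiagram //
    p.1.card + p.2.1.card + p.2.2.card = n ∧
    p.1.IsThreeCore ∧ p.2.1.IsThreeCore ∧ p.2.2.IsThreeCore}


def chi (n : ℕ) : ℤ := if n % 3 = 1 then 1 else if n % 3 = 2 then -1 else 0

def rho (k : ℕ) : ℤ := ∑ d ∈ k.divisors, chi d

def QQ (m : ℕ) : Finset (ℕ × ℕ × ℕ × ℕ) :=
  ((Finset.range (m+1)) ×ˢ (Finset.range (m+1)) ×ˢ (Finset.range (m+1)) ×ˢ (Finset.range (m+1))).filter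
    (fun t => 0 < t.1 ∧ 0 < t.2.1 ∧ 0 < t.2.2.1 ∧ 0 < t.2.2.2 ∧ t.1 * t.2.1 + t.2.2.1 * t.2.2.2 = m)

lemma mem_QQ {m a x b y : ℕ} : (a, x, b, y) ∈ QQ m ↔
    0 < a ∧ 0 < x ∧ 0 < b ∧ 0 < y ∧ a * x + b * y = m := by
  simp only [QQ, Finset.mem_filter, Finset.mem_product, Finset.mem_range]
  constructor
  · tauto
  · rintro ⟨ha, hx, hb, hy, h⟩
    refine ⟨⟨?_, ?_, ?_, ?_⟩, ha, hx, hb, hy, h⟩ <;> nlinarith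

/-- indicator of divisibility by three -/
def f3 (n : ℕ) : ℤ := if n % 3 = 0 then 1 else 0

lemma tri_split {α : Type*} (s : Finset α) (u v : α → ℕ) (g : α → ℤ) :
    ∑ t ∈ s, g t = ∑ t ∈ s with u t = v t, g t + ∑ t ∈ s with v t < u t, g t
      + ∑ t ∈ s with u t < v t, g t := by
  simp only [Finset.sum_filter]
  rw [← Finset.sum_add_distrib, ← Finset.sum_add_distrib]
  refine Finset.sum_congr rfl fun t _ => ?_
  rcases lt_trichotomy (u t) (v t) with h | h | h
  · simp [h, h.ne, h.le, not_lt.2 h.le]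
  · simp [h]
  · simp [h, h.ne', not_lt.2 h.le]

lemma step1 (m : ℕ) (g : ℕ → ℕ → ℤ) (hg : ∀ a b, g a b = g b a) :
    ∑ t ∈ QQ m with t.1 < t.2.2.1, g t.1 t.2.2.1 = ∑ t ∈ QQ m with t.2.2.1 < t.1, g t.1 t.2.2.1 := by
  refine Finset.sum_nbij' (fun t => (t.2.2.1, t.2.2.2, t.1, t.2.1))
    (fun t => (t.2.2.1, t.2.2.2, t.1, t.2.1)) ?_ ?_ ?_ ?_ ?_
  all_goals rintro ⟨a, x, b, y⟩ h
  all_goals simp only [Finset.mem_filter, mem_QQ] at h ⊢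
  · obtain ⟨⟨h1, h2, h3, h4, h5⟩, h6⟩ := h
    exact ⟨⟨h3, h4, h1, h2, by linarith⟩, h6⟩
  · obtain ⟨⟨h1, h2, h3, h4, h5⟩, h6⟩ := h
    exact ⟨⟨h3, h4, h1, h2, by linarith⟩, h6⟩
  · exact hg _ _

lemma step1' (m : ℕ) (g : ℕ → ℕ → ℤ) (hg : ∀ a b, g a b = g b a) :
    ∑ t ∈ QQ m with t.2.1 < t.2.2.2, g t.1 t.2.2.1 = ∑ t ∈ QQ m with t.2.2.2 < t.2.1, g t.1 t.2.2.1 := by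
  refine Finset.sum_nbij' (fun t => (t.2.2.1, t.2.2.2, t.1, t.2.1))
    (fun t => (t.2.2.1, t.2.2.2, t.1, t.2.1)) ?_ ?_ ?_ ?_ ?_
  all_goals rintro ⟨a, x, b, y⟩ h
  all_goals simp only [Finset.mem_filter, mem_QQ] at h ⊢
  · obtain ⟨⟨h1, h2, h3, h4, h5⟩, h6⟩ := h
    exact ⟨⟨h3, h4, h1, h2, by linarith⟩, h6⟩
  · obtain ⟨⟨h1, h2, h3, h4, h5⟩, h6⟩ := h
    exact ⟨⟨h3, h4, h1, h2, by linarith⟩, h6⟩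
  · exact hg _ _

lemma step2 (m : ℕ) (f : ℕ → ℤ) :
    ∑ t ∈ QQ m with t.2.2.1 < t.1, f (t.1 - t.2.2.1) = ∑ t ∈ QQ m with t.2.1 < t.2.2.2, f t.1 := by
  refine Finset.sum_nbij' (fun t => (t.1 - t.2.2.1, t.2.1, t.2.2.1, t.2.1 + t.2.2.2))
    (fun t => (t.1 + t.2.2.1, t.2.1, t.2.2.1, t.2.2.2 - t.2.1)) ?_ ?_ ?_ ?_ ?_
  all_goals rintro ⟨a, x, b, y⟩ h
  all_goals simp only [Finset.mem_filter, mem_QQ, Prod.mk.injEq] at h ⊢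
  all_goals obtain ⟨⟨h1, h2, h3, h4, h5⟩, h6⟩ := h
  · obtain ⟨c, rfl⟩ := Nat.exists_eq_add_of_lt h6
    rw [show b + c + 1 - b = c + 1 by omega]
    exact ⟨⟨by omega, h2, h3, by omega, by rw [← h5]; ring⟩, by omega⟩
  · obtain ⟨c, rfl⟩ := Nat.exists_eq_add_of_lt h6
    rw [show x + c + 1 - x = c + 1 by omega]
    exact ⟨⟨by omega, h2, h3, by omega, by rw [← h5]; ring⟩, by omega⟩
  · refine ⟨?_, trivial, trivial, ?_⟩ <;> omega
  · refine ⟨?_, trivial, trivial, ?_⟩ <;> omega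

lemma step4 (m : ℕ) (f : ℕ → ℤ) :
    ∑ t ∈ QQ m with t.2.2.2 < t.2.1, f (t.1 + t.2.2.1) = ∑ t ∈ QQ m with t.2.2.1 < t.1, f t.1 := by
  refine Finset.sum_nbij' (fun t => (t.1 + t.2.2.1, t.2.2.2, t.1, t.2.1 - t.2.2.2))
    (fun t => (t.2.2.1, t.2.1 + t.2.2.2, t.1 - t.2.2.1, t.2.1)) ?_ ?_ ?_ ?_ ?_
  all_goals rintro ⟨a, x, b, y⟩ h
  all_goals simp only [Finset.mem_filter, mem_QQ, Prod.mk.injEq] at h ⊢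
  all_goals obtain ⟨⟨h1, h2, h3, h4, h5⟩, h6⟩ := h
  · obtain ⟨c, rfl⟩ := Nat.exists_eq_add_of_lt h6
    rw [show y + c + 1 - y = c + 1 by omega]
    exact ⟨⟨by omega, h4, h1, by omega, by rw [← h5]; ring⟩, by omega⟩
  · obtain ⟨c, rfl⟩ := Nat.exists_eq_add_of_lt h6
    rw [show b + c + 1 - b = c + 1 by omega]
    exact ⟨⟨by omega, by omega, by omega, by omega, by rw [← h5]; ring⟩, by omega⟩
  · refine ⟨trivial, ?_, ?_, trivial⟩ <;> omega
  · refine ⟨?_, trivial, trivial, ?_⟩ <;> omega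

lemma step5 (m : ℕ) (f : ℕ → ℤ) :
    ∑ t ∈ QQ m with t.1 < t.2.2.1, f t.1 = ∑ t ∈ QQ m with t.2.2.2 < t.2.1, f t.1 := by
  refine Finset.sum_nbij' (fun t => (t.1, t.2.1 + t.2.2.2, t.2.2.1 - t.1, t.2.2.2))
    (fun t => (t.1, t.2.1 - t.2.2.2, t.2.2.1 + t.1, t.2.2.2)) ?_ ?_ ?_ ?_ ?_
  all_goals rintro ⟨a, x, b, y⟩ h
  all_goals simp only [Finset.mem_filter, mem_QQ, Prod.mk.injEq] at h ⊢
  all_goals obtain ⟨⟨h1, h2, h3, h4, h5⟩, h6⟩ := h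
  · obtain ⟨c, rfl⟩ := Nat.exists_eq_add_of_lt h6
    rw [show a + c + 1 - a = c + 1 by omega]
    exact ⟨⟨by omega, by omega, by omega, by omega, by rw [← h5]; ring⟩, by omega⟩
  · obtain ⟨c, rfl⟩ := Nat.exists_eq_add_of_lt h6
    rw [show y + c + 1 - y = c + 1 by omega]
    exact ⟨⟨by omega, by omega, by omega, by omega, by rw [← h5]; ring⟩, by omega⟩
  · refine ⟨trivial, ?_, ?_, trivial⟩ <;> omega
  · refine ⟨trivial, ?_, ?_, trivial⟩ <;> omega

lemma step7 (m : ℕ) :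
    ∑ t ∈ QQ m with t.1 = t.2.2.1, (1:ℤ) = ∑ t ∈ QQ m with t.2.1 = t.2.2.2, (1:ℤ) := by
  refine Finset.sum_nbij' (fun t => (t.2.1, t.1, t.2.2.2, t.2.2.1))
    (fun t => (t.2.1, t.1, t.2.2.2, t.2.2.1)) ?_ ?_ ?_ ?_ ?_
  all_goals rintro ⟨a, x, b, y⟩ h
  all_goals simp only [Finset.mem_filter, mem_QQ, Prod.mk.injEq] at h ⊢
  all_goals obtain ⟨⟨h1, h2, h3, h4, h5⟩, h6⟩ := h
  · exact ⟨⟨by omega, by omega, by omega, by omega, by rw [← h5]; ring⟩, by omega⟩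
  · exact ⟨⟨by omega, by omega, by omega, by omega, by rw [← h5]; ring⟩, by omega⟩

lemma step8 (m : ℕ) (f : ℕ → ℤ) :
    ∑ t ∈ QQ m with t.2.1 = t.2.2.2, f t.1 = ∑ D ∈ m.divisors, ∑ a ∈ Finset.Ico 1 D, f a := by
  rw [Finset.sum_sigma']
  refine Finset.sum_nbij' (fun t => ⟨t.1 + t.2.2.1, t.1⟩)
    (fun t => (t.2, m / t.1, t.1 - t.2, m / t.1)) ?_ ?_ ?_ ?_ ?_
  · rintro ⟨a, x, b, y⟩ h
    simp only [Finset.mem_filter, mem_QQ] at h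
    obtain ⟨⟨h1, h2, h3, h4, h5⟩, rfl⟩ := h
    simp only [Finset.mem_sigma, Nat.mem_divisors, Finset.mem_Ico]
    refine ⟨⟨⟨x, by rw [← h5]; ring⟩, by nlinarith⟩, by omega, by omega⟩
  · rintro ⟨D, a⟩ h
    simp only [Finset.mem_sigma, Nat.mem_divisors, Finset.mem_Ico] at h
    obtain ⟨⟨⟨e, rfl⟩, h0⟩, h1, h2⟩ := h
    simp only [Finset.mem_filter, mem_QQ]
    have hD : 0 < D := by omega
    have he : 0 < e := Nat.pos_of_ne_zero (by rintro rfl; simp at h0)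
    rw [Nat.mul_div_cancel_left _ hD]
    refine ⟨⟨by omega, he, by omega, he, ?_⟩, trivial⟩
    rw [← add_mul]; congr 1; omega
  · rintro ⟨a, x, b, y⟩ h
    simp only [Finset.mem_filter, mem_QQ] at h
    obtain ⟨⟨h1, h2, h3, h4, h5⟩, rfl⟩ := h
    have : m / (a + b) = x := by
      rw [← h5, ← add_mul, Nat.mul_div_cancel_left _ (by omega)]
    simp [this]
  · rintro ⟨D, a⟩ h
    simp only [Finset.mem_sigma, Nat.mem_divisors, Finset.mem_Ico] at h
    simp; omega
  · rintro ⟨a, x, b, y⟩ h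
    rfl

lemma rho_two (m : ℕ) (hm : m % 3 = 2) : rho m = 0 := by
  have h : rho m = ∑ d ∈ m.divisors, chi (m / d) := by
    rw [rho, Nat.sum_div_divisors]
  have h2 : rho m = - rho m := by
    nth_rw 1 [h]
    rw [rho, ← Finset.sum_neg_distrib]
    refine Finset.sum_congr rfl fun d hd => ?_
    obtain ⟨⟨e, rfl⟩, h0⟩ := Nat.mem_divisors.1 hd
    have hD : 0 < d := Nat.pos_of_ne_zero (by rintro rfl; simp at h0)
    rw [Nat.mul_div_cancel_left _ hD]
    rw [Nat.mul_mod] at hm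
    have h3 : d % 3 < 3 := Nat.mod_lt _ (by norm_num)
    have h4 : e % 3 < 3 := Nat.mod_lt _ (by norm_num)
    unfold chi
    generalize d % 3 = u at *
    generalize e % 3 = v at *
    interval_cases u <;> interval_cases v <;> simp_all
  omega

lemma f3_count (D : ℕ) (hD : D % 3 ≠ 0) : ∑ a ∈ Finset.Ico 1 D, f3 a = (D / 3 : ℕ) := by
  have : ∀ D : ℕ, ∑ a ∈ Finset.Ico 1 (D+1), f3 a = (D / 3 : ℕ) := by
    intro D
    induction D with
    | zero => simp
    | succ k ih =>
      rw [Finset.sum_Ico_succ_top (by omega), ih]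
      unfold f3
      split_ifs <;> omega
  obtain ⟨k, rfl⟩ : ∃ k, D = k + 1 := ⟨D - 1, by omega⟩
  rw [this]; congr 1; omega

lemma liouville (m : ℕ) (hm : m % 3 = 2) :
    3 * ∑ t ∈ QQ m, chi t.1 * chi t.2.2.1 = ∑ d ∈ m.divisors, (d : ℤ) := by
  set g : ℕ → ℕ → ℤ := fun a b => f3 (a - b + (b - a)) with hg
  have e0 : ∑ t ∈ QQ m, chi t.1 * chi t.2.2.1
      = ∑ t ∈ QQ m, g t.1 t.2.2.1 - ∑ t ∈ QQ m, f3 (t.1 + t.2.2.1) := by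
    rw [← Finset.sum_sub_distrib]
    refine Finset.sum_congr rfl fun t _ => ?_
    simp only [hg, chi, f3]
    split_ifs <;> first | rfl | omega
  have e1 := tri_split (QQ m) (fun t => t.1) (fun t => t.2.2.1) (fun t => g t.1 t.2.2.1)
  have e2 := step1 m g (fun a b => by simp only [hg]; congr 1; omega)
  have e3 : ∑ t ∈ QQ m with t.2.2.1 < t.1, g t.1 t.2.2.1 =
      ∑ t ∈ QQ m with t.2.2.1 < t.1, f3 (t.1 - t.2.2.1) := by
    refine Finset.sum_congr rfl fun t ht => ?_
    have := (Finset.mem_filter.1 ht).2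
    simp only [hg]; congr 1; omega
  have e4 := step2 m f3
  have e5 := tri_split (QQ m) (fun t => t.2.1) (fun t => t.2.2.2) (fun t => f3 (t.1 + t.2.2.1))
  have e6 := step1' m (fun a b => f3 (a + b)) (fun a b => by rw [add_comm])
  have e7 := step4 m f3
  have e8 := step5 m f3
  have e9 := tri_split (QQ m) (fun t => t.1) (fun t => t.2.2.1) (fun t => f3 t.1)
  have e10 := tri_split (QQ m) (fun t => t.2.1) (fun t => t.2.2.2) (fun t => f3 t.1)
  have e11 : ∑ t ∈ QQ m with t.1 = t.2.2.1, f3 t.1 = 0 := by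
    refine Finset.sum_eq_zero ?_
    rintro ⟨a, x, b, y⟩ h
    simp only [Finset.mem_filter, mem_QQ] at h
    obtain ⟨⟨h1, h2, h3, h4, h5⟩, rfl⟩ := h
    unfold f3
    rw [if_neg]
    intro h
    obtain ⟨c, rfl⟩ := Nat.dvd_of_mod_eq_zero h
    have : m = 3 * (c * x + c * y) := by rw [← h5]; ring
    omega
  have e12 : ∑ t ∈ QQ m with t.2.1 = t.2.2.2, f3 (t.1 + t.2.2.1) = 0 := by
    refine Finset.sum_eq_zero ?_
    rintro ⟨a, x, b, y⟩ h
    simp only [Finset.mem_filter, mem_QQ] at h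
    obtain ⟨⟨h1, h2, h3, h4, h5⟩, rfl⟩ := h
    unfold f3
    rw [if_neg]
    intro h
    obtain ⟨c, hc⟩ := Nat.dvd_of_mod_eq_zero h
    have : m = 3 * (c * x) := by rw [← h5, ← add_mul]; simp only at hc; rw [hc]; ring
    omega
  have e13 : ∑ t ∈ QQ m with t.1 = t.2.2.1, g t.1 t.2.2.1 = ∑ t ∈ QQ m with t.1 = t.2.2.1, (1:ℤ) := by
    refine Finset.sum_congr rfl fun t ht => ?_
    have := (Finset.mem_filter.1 ht).2
    simp [hg, this, f3]
  have e14 := step7 m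
  have e15 := step8 m (fun _ => 1)
  have e16 := step8 m f3
  have key : ∑ t ∈ QQ m, chi t.1 * chi t.2.2.1 =
      ∑ D ∈ m.divisors, ∑ a ∈ Finset.Ico 1 D, (1:ℤ) - 2 * ∑ D ∈ m.divisors, ∑ a ∈ Finset.Ico 1 D, f3 a := by
    linarith
  have e17 := rho_two m hm
  unfold rho at e17
  rw [key, mul_sub, ← mul_assoc, Finset.mul_sum, Finset.mul_sum, ← Finset.sum_sub_distrib,
    ← sub_eq_zero, ← Finset.sum_sub_distrib, ← neg_eq_zero, ← e17, ← Finset.sum_neg_distrib]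
  refine Finset.sum_congr rfl fun D hD => ?_
  have hD3 : D % 3 ≠ 0 := by
    intro h
    have := (Nat.dvd_of_mod_eq_zero h).trans (Nat.mem_divisors.1 hD).1
    omega
  rw [f3_count D hD3]
  simp only [Finset.sum_const, Nat.card_Ico, chi, nsmul_eq_mul, mul_one]
  split_ifs <;> omega

lemma QQ_rho (m : ℕ) : ∑ t ∈ QQ m, chi t.1 * chi t.2.2.1
    = ∑ k ∈ Finset.HasAntidiagonal.antidiagonal m, rho k.1 * rho k.2 := by
  have h1 : ∀ k, rho k = ∑ d ∈ k.divisorsAntidiagonal, chi d.1 := by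
    intro k; rw [rho, Nat.sum_divisorsAntidiagonal (fun a _ => chi a)]
  simp only [h1, Finset.sum_mul_sum, ← Finset.sum_product']
  rw [Finset.sum_sigma']
  refine Finset.sum_nbij' (fun t => ⟨(t.1 * t.2.1, t.2.2.1 * t.2.2.2), ((t.1, t.2.1), (t.2.2.1, t.2.2.2))⟩)
    (fun t => (t.2.1.1, t.2.1.2, t.2.2.1, t.2.2.2)) ?_ ?_ ?_ ?_ ?_
  · rintro ⟨a, x, b, y⟩ h
    simp only [mem_QQ] at h
    obtain ⟨h1, h2, h3, h4, h5⟩ := h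
    simp [h5]
    omega
  · rintro ⟨⟨k, l⟩, ⟨a, x⟩, ⟨b, y⟩⟩ h
    simp at h
    obtain ⟨h0, ⟨rfl, h2⟩, rfl, h3⟩ := h
    simp only [mem_QQ]
    simp at h2 h3
    omega
  · rintro ⟨a, x, b, y⟩ h
    rfl
  · rintro ⟨⟨k, l⟩, ⟨a, x⟩, ⟨b, y⟩⟩ h
    simp at h
    obtain ⟨h0, ⟨rfl, h2⟩, rfl, h3⟩ := h
    rfl
  · rintro ⟨a, x, b, y⟩ h
    rfl

lemma rho_conv (n : ℕ) :
    3 * ∑ k ∈ Finset.HasAntidiagonal.antidiagonal n, rho (3 * k.1 + 1) * rho (3 * k.2 + 1)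
      = ∑ d ∈ (3 * n + 2).divisors, (d : ℤ) := by
  rw [← liouville _ (by omega), QQ_rho]
  congr 1
  have : ∑ k ∈ Finset.HasAntidiagonal.antidiagonal (3 * n + 2), rho k.1 * rho k.2
      = ∑ k ∈ Finset.HasAntidiagonal.antidiagonal (3 * n + 2) with k.1 % 3 = 1, rho k.1 * rho k.2 := by
    rw [Finset.sum_filter]
    refine Finset.sum_congr rfl fun k hk => ?_
    have := Finset.HasAntidiagonal.mem_antidiagonal.1 hk
    split_ifs with h
    · rfl
    · rcases (by omega : k.1 % 3 = 2 ∨ k.2 % 3 = 2) with h | h <;> simp [rho_two _ h]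
  rw [this]
  refine Finset.sum_nbij' (fun k => (3 * k.1 + 1, 3 * k.2 + 1)) (fun k => (k.1 / 3, k.2 / 3)) ?_ ?_ ?_ ?_ ?_
  · rintro ⟨i, j⟩ h
    simp at h ⊢; omega
  · rintro ⟨i, j⟩ h
    simp at h ⊢; omega
  · rintro ⟨i, j⟩ h
    simp; omega
  · rintro ⟨i, j⟩ h
    simp at h ⊢; omega
  · rintro ⟨i, j⟩ h
    rfl
lemma chi_mul (a b : ℕ) : chi (a * b) = chi a * chi b := by
  unfold chi
  rw [Nat.mul_mod]
  have h3 : a % 3 < 3 := Nat.mod_lt _ (by norm_num)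
  have h4 : b % 3 < 3 := Nat.mod_lt _ (by norm_num)
  generalize a % 3 = u at *
  generalize b % 3 = v at *
  interval_cases u <;> interval_cases v <;> simp

lemma rho_rec (p k : ℕ) (hp : p.Prime) (hk : k ≠ 0) :
    rho (p * k) + ∑ e ∈ k.divisors with p * e ∣ k, chi (p * e) = rho k + chi p * rho k := by
  have hinj : Set.InjOn (fun e => p * e) (k.divisors : Set ℕ) := by
    intro a _ b _ h
    exact Nat.eq_of_mul_eq_mul_left hp.pos h
  have h1 : (p * k).divisors = k.divisors ∪ k.divisors.image (fun e => p * e) := by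
    ext d
    simp only [Nat.mem_divisors, Finset.mem_union, Finset.mem_image]
    constructor
    · rintro ⟨h, h0⟩
      by_cases hd : p ∣ d
      · obtain ⟨e, rfl⟩ := hd
        exact Or.inr ⟨e, ⟨Nat.dvd_of_mul_dvd_mul_left hp.pos h, hk⟩, rfl⟩
      · left
        exact ⟨((hp.coprime_iff_not_dvd.2 hd).symm).dvd_of_dvd_mul_left h, hk⟩
    · rintro (⟨h, _⟩ | ⟨e, ⟨h, _⟩, rfl⟩)
      · exact ⟨h.mul_left _, mul_ne_zero hp.ne_zero hk⟩
      · exact ⟨mul_dvd_mul_left _ h, mul_ne_zero hp.ne_zero hk⟩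
  have h2 : k.divisors ∩ k.divisors.image (fun e => p * e)
      = (k.divisors.filter (fun e => p * e ∣ k)).image (fun e => p * e) := by
    ext d
    simp only [Nat.mem_divisors, Finset.mem_inter, Finset.mem_image, Finset.mem_filter]
    constructor
    · rintro ⟨⟨h, _⟩, e, he, rfl⟩
      exact ⟨e, ⟨he, h⟩, rfl⟩
    · rintro ⟨e, ⟨he, h⟩, rfl⟩
      exact ⟨⟨h, hk⟩, e, he, rfl⟩
  have h3 := Finset.sum_union_inter (s₁ := k.divisors) (s₂ := k.divisors.image (fun e => p * e)) (f := chi)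
  rw [← h1, h2, Finset.sum_image hinj, Finset.sum_image (hinj.mono (Finset.coe_subset.2 (Finset.filter_subset _ _)))] at h3
  simp only [rho]
  rw [h3, Finset.mul_sum]
  simp only [chi_mul]

lemma rho_rec1 (p j : ℕ) (hp : p.Prime) (hj : j ≠ 0) :
    rho (p * (p * j)) + chi p * rho j = (1 + chi p) * rho (p * j) := by
  have h := rho_rec p (p * j) hp (mul_ne_zero hp.ne_zero hj)
  have : (p * j).divisors.filter (fun e => p * e ∣ p * j) = j.divisors := by
    ext e
    simp only [Finset.mem_filter, Nat.mem_divisors, Nat.mul_dvd_mul_iff_left hp.pos]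
    constructor
    · rintro ⟨_, h⟩; exact ⟨h, hj⟩
    · rintro ⟨h, _⟩; exact ⟨⟨h.mul_left _, mul_ne_zero hp.ne_zero hj⟩, h⟩
  rw [this] at h
  simp only [chi_mul] at h
  rw [← Finset.mul_sum] at h
  rw [add_mul, one_mul]
  exact h

lemma rho_rec2 (p k : ℕ) (hp : p.Prime) (hk : k ≠ 0) (hpk : ¬ p ∣ k) :
    rho (p * k) = (1 + chi p) * rho k := by
  have h := rho_rec p k hp hk
  have : k.divisors.filter (fun e => p * e ∣ k) = ∅ := by
    ext e
    simp only [Finset.mem_filter, Finset.notMem_empty, iff_false, not_and]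
    intro _ h
    exact hpk ((dvd_mul_right _ _).trans h)
  rw [this] at h
  simp at h
  linarith

/-- vectors of norm `k` -/
def SS (k : ℕ) : Set (ℤ × ℤ) := {v | v.1 ^ 2 + v.1 * v.2 + v.2 ^ 2 = k}

lemma mem_SS {k : ℕ} {x y : ℤ} : (x, y) ∈ SS k ↔ x ^ 2 + x * y + y ^ 2 = k := Iff.rfl

lemma SS_finite (k : ℕ) : (SS k).Finite := by
  refine Set.Finite.subset (Set.finite_Icc ((-(2*k) : ℤ), (-(2*k) : ℤ)) ((2*k : ℤ), (2*k : ℤ))) ?_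
  rintro ⟨x, y⟩ h
  rw [mem_SS] at h
  have hx : x ^ 2 ≤ 2 * k := by nlinarith [sq_nonneg (x + 2 * y), sq_nonneg (x+y), sq_nonneg x, sq_nonneg y]
  have hy : y ^ 2 ≤ 2 * k := by nlinarith [sq_nonneg (2 * x + y), sq_nonneg (x+y), sq_nonneg x, sq_nonneg y]
  have b : ∀ z : ℤ, z ^ 2 ≤ 2 * k → -(2 * k) ≤ z ∧ z ≤ 2 * k := by
    intro z hz
    have := Int.le_self_sq z
    have := Int.le_self_sq (-z)
    constructor <;> nlinarith
  have := b x hx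
  have := b y hy
  simp only [Set.mem_Icc, Prod.mk_le_mk]
  tauto

lemma SS_one : (SS 1).ncard = 6 := by
  have : SS 1 = (({(1,0),(-1,0),(0,1),(0,-1),(1,-1),(-1,1)} : Finset (ℤ × ℤ)) : Set (ℤ × ℤ)) := by
    ext ⟨x, y⟩
    rw [mem_SS]
    simp only [Finset.coe_insert, Finset.coe_singleton, Set.mem_insert_iff, Set.mem_singleton_iff, Prod.mk.injEq]
    constructor
    · intro h
      have h1 : x ≤ 1 := by push_cast at h; nlinarith [sq_nonneg (x + 2 * y)]
      have h2 : -1 ≤ x := by push_cast at h; nlinarith [sq_nonneg (x + 2 * y)]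
      have h3 : y ≤ 1 := by push_cast at h; nlinarith [sq_nonneg (2 * x + y)]
      have h4 : -1 ≤ y := by push_cast at h; nlinarith [sq_nonneg (2 * x + y)]
      interval_cases x <;> interval_cases y <;> simp_all
    · rintro (⟨rfl, rfl⟩ | ⟨rfl, rfl⟩ | ⟨rfl, rfl⟩ | ⟨rfl, rfl⟩ | ⟨rfl, rfl⟩ | ⟨rfl, rfl⟩) <;> norm_num
  rw [this, Set.ncard_coe_finset]
  decide

/-- multiplication -/
def mulv (a b : ℤ) (v : ℤ × ℤ) : ℤ × ℤ := (a * v.1 - b * v.2, a * v.2 + b * v.1 + b * v.2)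

lemma mulv_conj (a b : ℤ) (v : ℤ × ℤ) : mulv (a + b) (-b) (mulv a b v) =
    ((a ^ 2 + a * b + b ^ 2) * v.1, (a ^ 2 + a * b + b ^ 2) * v.2) := by
  simp only [mulv, Prod.mk.injEq]
  constructor <;> ring

lemma mulv_inj (a b : ℤ) (h : a ^ 2 + a * b + b ^ 2 ≠ 0) : Function.Injective (mulv a b) := by
  intro v w hvw
  have := congrArg (mulv (a + b) (-b)) hvw
  rw [mulv_conj, mulv_conj, Prod.mk.injEq] at this
  exact Prod.ext (mul_left_cancel₀ h this.1) (mul_left_cancel₀ h this.2)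

lemma mulv_mem (a b : ℤ) (p k : ℕ) (hab : a ^ 2 + a * b + b ^ 2 = p) (v : ℤ × ℤ) (hv : v ∈ SS k) :
    mulv a b v ∈ SS (p * k) := by
  obtain ⟨x, y⟩ := v
  rw [mem_SS] at hv
  simp only [mulv]
  rw [mem_SS]
  push_cast
  rw [← hab, ← hv]; ring

/-- scaling -/
def smulv (p : ℕ) (v : ℤ × ℤ) : ℤ × ℤ := (p * v.1, p * v.2)

lemma smulv_inj (p : ℕ) (hp : p ≠ 0) : Function.Injective (smulv p) := by
  intro v w hvw
  simp only [smulv, Prod.mk.injEq] at hvw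
  have hp' : (p : ℤ) ≠ 0 := by exact_mod_cast hp
  exact Prod.ext (mul_left_cancel₀ hp' hvw.1) (mul_left_cancel₀ hp' hvw.2)

lemma smulv_SS (p k : ℕ) (hp : p ≠ 0) (v : ℤ × ℤ) : smulv p v ∈ SS (p * (p * k)) ↔ v ∈ SS k := by
  obtain ⟨x, y⟩ := v
  simp only [smulv, mem_SS]
  have hp' : (p : ℤ) ≠ 0 := by exact_mod_cast hp
  push_cast
  constructor
  · intro h
    refine mul_left_cancel₀ (mul_ne_zero hp' hp') ?_
    linear_combination h
  · intro h
    linear_combination p * p * h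

lemma cube_root (p : ℕ) (hp : p.Prime) (h3 : p % 3 = 1) :
    ∃ t : ZMod p, t ^ 2 + t + 1 = 0 := by
  have := Fact.mk hp
  have : Fact (Nat.Prime 3) := ⟨by norm_num⟩
  obtain ⟨u, hu⟩ := exists_prime_orderOf_dvd_card (G := (ZMod p)ˣ) 3
    (by rw [ZMod.card_units_eq_totient, Nat.totient_prime hp]; omega)
  have h1 : u ^ 3 = 1 := by rw [← hu]; exact pow_orderOf_eq_one u
  have h2 : u ≠ 1 := by rintro rfl; simp at hu
  refine ⟨u, ?_⟩
  have h1' : (u : ZMod p) ^ 3 = 1 := by rw [← Units.val_pow_eq_pow_val, h1]; rfl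
  have h2' : (u : ZMod p) - 1 ≠ 0 := by
    intro h; apply h2; ext; simpa using sub_eq_zero.1 h
  refine (mul_eq_zero.1 (?_ : ((u : ZMod p) - 1) * _ = 0)).resolve_left h2'
  linear_combination h1'

lemma inert (p : ℕ) (hp : p.Prime) (h3 : p % 3 = 2) (x y : ℤ)
    (h : (p : ℤ) ∣ x ^ 2 + x * y + y ^ 2) : (p : ℤ) ∣ x ∧ (p : ℤ) ∣ y := by
  have := Fact.mk hp
  have hpi : Prime (p : ℤ) := Nat.prime_iff_prime_int.1 hp
  have hy : (p : ℤ) ∣ y := by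
    by_contra hy
    have hy' : (y : ZMod p) ≠ 0 := by rwa [Ne, ZMod.intCast_zmod_eq_zero_iff_dvd] 
    have h' : (x : ZMod p) ^ 2 + x * y + y ^ 2 = 0 := by
      have := (ZMod.intCast_zmod_eq_zero_iff_dvd _ p).2 h
      push_cast at this; exact this
    set t : ZMod p := x / y with ht
    have htt : t ^ 2 + t + 1 = 0 := by
      rw [ht]; field_simp; linear_combination h'
    have h1 : t ^ 3 = 1 := by linear_combination (t - 1) * htt
    have h2 : t ≠ 1 := by
      intro h
      rw [h] at htt
      have : ((3 : ℕ) : ZMod p) = 0 := by push_cast; linear_combination htt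
      rw [ZMod.natCast_eq_zero_iff] at this
      have := (Nat.prime_dvd_prime_iff_eq hp (by norm_num)).1 this
      omega
    have : Fact (Nat.Prime 3) := ⟨by norm_num⟩
    have h4 := orderOf_eq_prime h1 h2
    have h5 : t ≠ 0 := by rintro h; rw [h] at h1; simp at h1
    have h6 := ZMod.orderOf_dvd_card_sub_one h5
    rw [h4] at h6
    have := hp.two_le
    omega
  refine ⟨?_, hy⟩
  have : (p : ℤ) ∣ x ^ 2 := by
    have h1 : (p : ℤ) ∣ (x + y) * y := hy.mul_left _
    have := dvd_sub h h1
    ring_nf at this; exact this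
  exact hpi.dvd_of_dvd_pow this

lemma SS_inert (p k : ℕ) (hp : p.Prime) (h3 : p % 3 = 2) :
    SS (p * (p * k)) = smulv p '' SS k := by
  ext ⟨x, y⟩
  constructor
  · intro h
    have h' := h
    rw [mem_SS] at h
    obtain ⟨⟨x, rfl⟩, ⟨y, rfl⟩⟩ := inert p hp h3 x y ⟨(p * k : ℤ), by rw [h]; push_cast; ring⟩
    exact ⟨(x, y), (smulv_SS p k hp.ne_zero _).1 h', rfl⟩
  · rintro ⟨v, hv, h⟩
    rw [← h]
    exact (smulv_SS p k hp.ne_zero _).2 hv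

lemma SS_inert' (p k : ℕ) (hp : p.Prime) (h3 : p % 3 = 2) (hk : ¬ p ∣ k) :
    SS (p * k) = ∅ := by
  rw [Set.eq_empty_iff_forall_notMem]
  rintro ⟨x, y⟩ h
  rw [mem_SS] at h
  obtain ⟨⟨x, rfl⟩, ⟨y, rfl⟩⟩ := inert p hp h3 x y ⟨(k : ℤ), by rw [h]; push_cast; ring⟩
  apply hk
  have hp' : (p : ℤ) ≠ 0 := by exact_mod_cast hp.ne_zero
  have : (p : ℤ) ∣ k := ⟨x ^ 2 + x * y + y ^ 2, mul_left_cancel₀ hp' (by push_cast at h; linear_combination - h)⟩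
  exact_mod_cast this

lemma split_rep (p : ℕ) (hp : p.Prime) (h3 : p % 3 = 1) :
    ∃ a b : ℤ, a ^ 2 + a * b + b ^ 2 = p := by
  have := Fact.mk hp
  obtain ⟨t, ht⟩ := cube_root p hp h3
  set s := Nat.sqrt p with hs
  have hs1 : p < (s + 1) * (s + 1) := Nat.lt_succ_sqrt p
  have hs2 : s * s < p := by
    refine lt_of_le_of_ne (Nat.sqrt_le p) ?_
    intro h
    rw [← h] at hp
    exact Nat.not_prime_mul (by rintro h; rw [h] at hp; norm_num at hp) (by rintro h; rw [h] at hp; norm_num at hp) hp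
  obtain ⟨⟨i, j⟩, hij, ⟨i', j'⟩, hij', hne, heq⟩ := Finset.exists_ne_map_eq_of_card_lt_of_maps_to
    (s := Finset.range (s+1) ×ˢ Finset.range (s+1)) (t := (Finset.univ : Finset (ZMod p)))
    (f := fun v => (v.1 : ZMod p) - t * v.2)
    (by rw [Finset.card_product, Finset.card_range, Finset.card_univ, ZMod.card]; exact hs1)
    (fun _ _ => Finset.mem_univ _)
  simp only [Finset.mem_product, Finset.mem_range] at hij hij' heq
  obtain ⟨x, hx⟩ : ∃ x : ℤ, x = i - i' := ⟨_, rfl⟩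
  obtain ⟨y, hy⟩ : ∃ y : ℤ, y = j - j' := ⟨_, rfl⟩
  have hd : (p : ℤ) ∣ x ^ 2 + x * y + y ^ 2 := by
    rw [← ZMod.intCast_zmod_eq_zero_iff_dvd]
    have : (x : ZMod p) = t * y := by
      rw [hx, hy]; push_cast; linear_combination heq
    push_cast
    rw [this]
    linear_combination y ^ 2 * ht
  have hxb : x ^ 2 ≤ s * s := by
    have : |x| ≤ |(s : ℤ)| := by rw [abs_le, Nat.abs_cast]; omega
    have := sq_le_sq.2 this
    nlinarith
  have hyb : y ^ 2 ≤ s * s := by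
    have : |y| ≤ |(s : ℤ)| := by rw [abs_le, Nat.abs_cast]; omega
    have := sq_le_sq.2 this
    nlinarith
  have hpos : 0 < x ^ 2 + x * y + y ^ 2 := by
    by_contra hcon
    have h1 : x = 0 := by
      have : x ^ 2 ≤ 0 := by nlinarith [sq_nonneg (x + 2 * y), sq_nonneg x]
      exact pow_eq_zero_iff (two_ne_zero) |>.1 (le_antisymm this (sq_nonneg x))
    have h2 : y = 0 := by
      have : y ^ 2 ≤ 0 := by nlinarith [sq_nonneg (2 * x + y), sq_nonneg y]
      exact pow_eq_zero_iff (two_ne_zero) |>.1 (le_antisymm this (sq_nonneg y))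
    apply hne
    rw [Prod.mk.injEq]; omega
  have hlt : x ^ 2 + x * y + y ^ 2 < 3 * p := by
    have : (s * s : ℤ) < p := by exact_mod_cast hs2
    nlinarith [sq_nonneg (x - y)]
  obtain ⟨c, hc⟩ := hd
  have hp0 : (0:ℤ) < p := by exact_mod_cast hp.pos
  have hc0 : 0 < c := by rw [hc] at hpos; exact pos_of_mul_pos_right hpos hp0.le
  have hc3 : c < 3 := by rw [hc] at hlt; nlinarith
  have : c = 1 ∨ c = 2 := by omega
  rcases this with rfl | rfl
  · exact ⟨x, y, by rw [hc]; ring⟩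
  · exfalso
    obtain ⟨⟨x, rfl⟩, ⟨y, rfl⟩⟩ := inert 2 (by norm_num) (by norm_num) x y ⟨p, by rw [hc]; push_cast; ring⟩
    have : (p : ℤ) = 2 * (x ^ 2 + x * y + y ^ 2) := by push_cast at hc; linarith
    have h2 : 2 ∣ p := by omega
    have := (Nat.prime_dvd_prime_iff_eq (by norm_num) hp).1 h2
    omega

lemma div_aux (p k : ℕ) (hp : p.Prime) (u v : ℤ) (h : (u, v) ∈ SS (p * (p * k))) (hv : (p : ℤ) ∣ v) :
    ∃ w ∈ SS k, (u, v) = smulv p w := by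
  have hpi : Prime (p : ℤ) := Nat.prime_iff_prime_int.1 hp
  have h0 := h
  rw [mem_SS] at h
  have : (p : ℤ) ∣ u ^ 2 := by
    have h1 : (p : ℤ) ∣ (u + v) * v := hv.mul_left _
    have h2 : (p : ℤ) ∣ u ^ 2 + u * v + v ^ 2 := by rw [h]; push_cast; exact dvd_mul_right _ _
    have := dvd_sub h2 h1
    ring_nf at this; exact this
  obtain ⟨x, rfl⟩ := hpi.dvd_of_dvd_pow this
  obtain ⟨y, rfl⟩ := hv
  exact ⟨(x, y), (smulv_SS p k hp.ne_zero _).1 h0, rfl⟩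

lemma SS_split_union (p k : ℕ) (hp : p.Prime) (a b : ℤ) (hab : a ^ 2 + a * b + b ^ 2 = p) :
    SS (p * k) = mulv a b '' SS k ∪ mulv (a + b) (-b) '' SS k := by
  have hpi : Prime (p : ℤ) := Nat.prime_iff_prime_int.1 hp
  have hab' : (a + b) ^ 2 + (a + b) * (-b) + (-b) ^ 2 = p := by rw [← hab]; ring
  ext ⟨x, y⟩
  constructor
  · intro h
    have hd : (p : ℤ) ∣ (b * x - a * y) * (a * y + b * x + b * y) := by
      rw [mem_SS] at h
      refine ⟨b ^ 2 * k - y ^ 2, ?_⟩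
      push_cast at h
      linear_combination b ^ 2 * h - y ^ 2 * hab
    rcases hpi.dvd_or_dvd hd with hd | hd
    · left
      have hm := mulv_mem _ _ p _ hab' _ h
      obtain ⟨w, hw, e⟩ := div_aux p k hp _ _ hm (by
        rw [← dvd_neg] at hd
        refine hd.trans (dvd_of_eq ?_)
        simp only; ring)
      refine ⟨w, hw, ?_⟩
      have e2 := congrArg (mulv a b) e
      have e3 := mulv_conj (a + b) (-b) (x, y)
      rw [hab', add_neg_cancel_right, neg_neg] at e3
      apply smulv_inj p hp.ne_zero
      change _ = (_, _)
      rw [← e3]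
      change _ = mulv a b (_, _)
      rw [e2]
      simp only [mulv, smulv, Prod.mk.injEq]
      constructor <;> ring
    · right
      have hm := mulv_mem _ _ p _ hab _ h
      obtain ⟨w, hw, e⟩ := div_aux p k hp _ _ hm hd
      refine ⟨w, hw, ?_⟩
      have e2 := congrArg (mulv (a+b) (-b)) e
      have e3 := mulv_conj a b (x, y)
      rw [hab] at e3
      apply smulv_inj p hp.ne_zero
      change _ = (_, _)
      rw [← e3]
      change _ = mulv _ _ (_, _)
      rw [e2]
      simp only [mulv, smulv, Prod.mk.injEq]
      constructor <;> ring
  · rintro (⟨v, hv, h⟩ | ⟨v, hv, h⟩)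
    · rw [← h]; exact mulv_mem _ _ p _ hab _ hv
    · rw [← h]; exact mulv_mem _ _ p _ hab' _ hv

lemma SS_split_inter (p k : ℕ) (hp : p.Prime) (h3 : p % 3 = 1) (a b : ℤ)
    (hab : a ^ 2 + a * b + b ^ 2 = p) (x y : ℤ)
    (h : (x, y) ∈ mulv a b '' SS k ∩ mulv (a + b) (-b) '' SS k) : (p : ℤ) ∣ x ∧ (p : ℤ) ∣ y := by
  have hpi : Prime (p : ℤ) := Nat.prime_iff_prime_int.1 hp
  obtain ⟨⟨⟨u, v⟩, _, h1⟩, ⟨⟨u', v'⟩, _, h2⟩⟩ := h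
  simp only [mulv, Prod.mk.injEq] at h1 h2
  have d1 : (p : ℤ) ∣ a * y - b * x := ⟨v, by rw [← hab, ← h1.1, ← h1.2]; ring⟩
  have d2 : (p : ℤ) ∣ a * y + b * x + b * y := ⟨v', by rw [← hab, ← h2.1, ← h2.2]; ring⟩
  have hb : ¬ (p : ℤ) ∣ b := by
    rintro ⟨c, rfl⟩
    have : (p : ℤ) ∣ a ^ 2 := ⟨1 - a * c - p * c ^ 2, by linear_combination hab⟩
    obtain ⟨d, rfl⟩ := hpi.dvd_of_dvd_pow this
    have : (p : ℤ) ∣ 1 := ⟨d ^ 2 + d * c + c ^ 2, mul_left_cancel₀ hpi.ne_zero (by linear_combination - hab)⟩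
    exact hpi.not_isUnit (isUnit_of_dvd_one this)
  have hab2 : ¬ (p : ℤ) ∣ 2 * a + b := by
    intro h
    have : (p : ℤ) ∣ 3 * b ^ 2 := by
      have h4 : (p : ℤ) ∣ (2 * a + b) * (2 * a + b) := h.mul_left _
      have h5 : (p : ℤ) ∣ 4 * p := dvd_mul_left _ _
      have := dvd_sub h5 h4
      have e : 4 * (p : ℤ) - (2 * a + b) * (2 * a + b) = 3 * b ^ 2 := by rw [← hab]; ring
      rwa [e] at this
    rcases hpi.dvd_or_dvd this with h | h
    · have : p ∣ 3 := by exact_mod_cast h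
      have := (Nat.prime_dvd_prime_iff_eq hp (by norm_num)).1 this
      omega
    · exact hb (hpi.dvd_of_dvd_pow h)
  have hy : (p : ℤ) ∣ y := by
    have := dvd_add d1 d2
    rw [show a * y - b * x + (a * y + b * x + b * y) = (2 * a + b) * y by ring] at this
    exact (hpi.dvd_or_dvd this).resolve_left hab2
  refine ⟨?_, hy⟩
  have := dvd_sub (hy.mul_left a) d1
  rw [show a * y - (a * y - b * x) = b * x by ring] at this
  exact (hpi.dvd_or_dvd this).resolve_left hb

lemma SS_split_card (p k : ℕ) (hp : p.Prime) (a b : ℤ)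
    (hab : a ^ 2 + a * b + b ^ 2 = p) :
    (SS (p * k)).ncard + (mulv a b '' SS k ∩ mulv (a + b) (-b) '' SS k).ncard = 2 * (SS k).ncard := by
  have hab' : (a + b) ^ 2 + (a + b) * (-b) + (-b) ^ 2 = p := by rw [← hab]; ring
  have hp0 : (p : ℤ) ≠ 0 := by exact_mod_cast hp.ne_zero
  rw [SS_split_union p k hp a b hab, Set.ncard_union_add_ncard_inter _ _ ((SS_finite k).image _) ((SS_finite k).image _),
    Set.ncard_image_of_injective _ (mulv_inj _ _ (by rw [hab]; exact hp0)),
    Set.ncard_image_of_injective _ (mulv_inj _ _ (by rw [hab']; exact hp0))]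
  ring

lemma SS_rho (k : ℕ) : k % 3 ≠ 0 → ((SS k).ncard : ℤ) = 6 * rho k := by
  induction k using Nat.strong_induction_on with
  | _ n ih =>
  intro hn
  by_cases h1 : n = 1
  · subst h1
    rw [SS_one]; simp [rho, chi]
  obtain ⟨p, hp, k, rfl⟩ := Nat.exists_prime_and_dvd h1
  have hk0 : k ≠ 0 := by rintro rfl; simp at hn
  have hlt : k < p * k := by nlinarith [hp.two_le, Nat.pos_of_ne_zero hk0]
  have hk3 : k % 3 ≠ 0 := fun h => hn (by rw [Nat.mul_mod, h]; simp)
  have hp3 : p % 3 ≠ 0 := fun h => hn (by rw [Nat.mul_mod, h]; simp)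
  have ihk := ih k hlt hk3
  by_cases hpk : p ∣ k
  · obtain ⟨j, rfl⟩ := hpk
    have hj0 : j ≠ 0 := by rintro rfl; simp at hn
    have hlt' : j < p * j := by nlinarith [hp.two_le, Nat.pos_of_ne_zero hj0]
    have hj3 : j % 3 ≠ 0 := fun h => hk3 (by rw [Nat.mul_mod, h]; simp)
    have ihj := ih j (hlt'.trans hlt) hj3
    have hr := rho_rec1 p j hp hj0
    rcases (by omega : p % 3 = 1 ∨ p % 3 = 2) with h3 | h3
    · obtain ⟨a, b, hab⟩ := split_rep p hp h3
      have hc := SS_split_card p (p * j) hp a b hab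
      have hi : mulv a b '' SS (p * j) ∩ mulv (a + b) (-b) '' SS (p * j) = smulv p '' SS j := by
        have hab' : (a + b) ^ 2 + (a + b) * (-b) + (-b) ^ 2 = p := by rw [← hab]; ring
        ext ⟨x, y⟩
        constructor
        · intro h
          have hm : (x, y) ∈ SS (p * (p * j)) := by
            rw [SS_split_union p (p * j) hp a b hab]; exact Or.inl h.1
          obtain ⟨⟨x, rfl⟩, ⟨y, rfl⟩⟩ := SS_split_inter p _ hp h3 a b hab x y h
          exact ⟨(x, y), (smulv_SS p j hp.ne_zero _).1 hm, rfl⟩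
        · rintro ⟨v, hv, h⟩
          rw [← h]
          refine ⟨⟨mulv (a + b) (-b) v, mulv_mem _ _ p _ hab' _ hv, ?_⟩,
            ⟨mulv a b v, mulv_mem _ _ p _ hab _ hv, ?_⟩⟩
          · have := mulv_conj (a + b) (-b) v
            rw [hab', add_neg_cancel_right, neg_neg] at this
            exact this
          · have := mulv_conj a b v
            rw [hab] at this
            exact this
      rw [hi, Set.ncard_image_of_injective _ (smulv_inj p hp.ne_zero)] at hc
      have hc' : ((SS (p * (p * j))).ncard : ℤ) + (SS j).ncard = 2 * (SS (p * j)).ncard := by exact_mod_cast hc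
      have : chi p = 1 := by simp [chi, h3]
      rw [this] at hr
      linarith
    · rw [SS_inert p j hp h3, Set.ncard_image_of_injective _ (smulv_inj p hp.ne_zero)]
      have : chi p = -1 := by simp [chi, h3]
      rw [this] at hr
      linarith
  · have hr := rho_rec2 p k hp hk0 hpk
    rcases (by omega : p % 3 = 1 ∨ p % 3 = 2) with h3 | h3
    · obtain ⟨a, b, hab⟩ := split_rep p hp h3
      have hc := SS_split_card p k hp a b hab
      have hi : mulv a b '' SS k ∩ mulv (a + b) (-b) '' SS k = ∅ := by
        rw [Set.eq_empty_iff_forall_notMem]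
        rintro ⟨x, y⟩ h
        have hm : (x, y) ∈ SS (p * k) := by
          rw [SS_split_union p k hp a b hab]; exact Or.inl h.1
        obtain ⟨⟨x, rfl⟩, ⟨y, rfl⟩⟩ := SS_split_inter p _ hp h3 a b hab x y h
        rw [mem_SS] at hm
        apply hpk
        have hp' : (p : ℤ) ≠ 0 := by exact_mod_cast hp.ne_zero
        have : (p : ℤ) ∣ k := ⟨x ^ 2 + x * y + y ^ 2, mul_left_cancel₀ hp' (by push_cast at hm; linear_combination - hm)⟩
        exact_mod_cast this
      rw [hi, Set.ncard_empty] at hc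
      have hc' : ((SS (p * k)).ncard : ℤ) = 2 * (SS k).ncard := by exact_mod_cast hc
      have : chi p = 1 := by simp [chi, h3]
      rw [this] at hr
      linarith
    · rw [SS_inert' p k hp h3 hpk]
      have : chi p = -1 := by simp [chi, h3]
      rw [this] at hr
      rw [hr]; simp

/-- pairs of naturals parametrizing three-cores of size `n` -/
def PP (n : ℕ) : Set (ℕ × ℕ) := {v | v.1 ^ 2 + v.2 ^ 2 + v.2 = n + v.1 * v.2}

/-- sector -/
def CC (k : ℕ) : Set (ℤ × ℤ) := {v | v ∈ SS k ∧ (v.1 - v.2) % 3 = 1 ∧ 0 < v.1 + 2 * v.2 ∧ 0 < 2 * v.1 + v.2}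

lemma PP_CC (n : ℕ) : (PP n).ncard = (CC (3 * n + 1)).ncard := by
  refine Set.ncard_congr (fun v _ => ((2 * v.2 + 1 - v.1, 2 * v.1 - v.2) : ℤ × ℤ)) ?_ ?_ ?_
  · rintro ⟨p, q⟩ h
    have h' : (p : ℤ) ^ 2 + q ^ 2 + q = n + p * q := by
      simp only [PP, Set.mem_ofPred_eq] at h; exact_mod_cast h
    refine ⟨?_, ?_, ?_, ?_⟩
    · rw [mem_SS]; push_cast; linear_combination 3 * h'
    · simp only; omega
    · simp only; omega
    · simp only; omega
  · rintro ⟨p, q⟩ ⟨p', q'⟩ _ _ h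
    simp only [Prod.mk.injEq] at h ⊢
    omega
  · rintro ⟨x, y⟩ ⟨h, h1, h2, h3⟩
    simp only at h1 h2 h3
    rw [mem_SS] at h
    obtain ⟨p, hp⟩ : ∃ p : ℕ, x + 2 * y = 3 * p + 1 := ⟨((x + 2 * y - 1) / 3).toNat, by omega⟩
    obtain ⟨q, hq⟩ : ∃ q : ℕ, 2 * x + y = 3 * q + 2 := ⟨((2 * x + y - 2) / 3).toNat, by omega⟩
    have hx : x = 2 * q + 1 - p := by omega
    have hy : y = 2 * p - q := by omega
    subst hx hy
    refine ⟨(p, q), ?_, rfl⟩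
    simp only [PP, Set.mem_ofPred_eq]
    push_cast at h
    have : (p : ℤ) ^ 2 + q ^ 2 + q = n + p * q := by linarith
    exact_mod_cast this

lemma SS_CC (k : ℕ) (hk : k % 3 = 1) : (SS k).ncard = 6 * (CC k).ncard := by
  set r : ℤ × ℤ → ℤ × ℤ := fun v => (-v.1 - v.2, v.1) with hr
  set s : ℤ × ℤ → ℤ × ℤ := fun v => (-v.1, -v.2) with hs
  have hri : Function.Injective r := by
    rintro ⟨a, b⟩ ⟨c, d⟩ h; simp only [hr, Prod.mk.injEq] at h ⊢; omega
  have hsi : Function.Injective s := by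
    rintro ⟨a, b⟩ ⟨c, d⟩ h; simp only [hs, Prod.mk.injEq] at h ⊢; omega
  set D : Set (ℤ × ℤ) := {v | v ∈ SS k ∧ (v.1 - v.2) % 3 = 1} with hD
  have hDf : D.Finite := (SS_finite k).subset (fun v hv => hv.1)
  have hCf : (CC k).Finite := (SS_finite k).subset (fun v hv => hv.1)
  have hne : ∀ x y : ℤ, (x, y) ∈ SS k → (x - y) % 3 ≠ 0 := by
    intro x y h h0
    rw [mem_SS] at h
    obtain ⟨c, hc⟩ := Int.dvd_of_emod_eq_zero h0
    obtain rfl : x = y + 3 * c := by linarith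
    have : (k : ℤ) = 3 * (y ^ 2 + 3 * c * y + 3 * c ^ 2) := by rw [← h]; ring
    omega
  have h1 : SS k = D ∪ s '' D := by
    ext ⟨x, y⟩
    constructor
    · intro h
      rcases (by have := hne x y h; omega : (x - y) % 3 = 1 ∨ (x - y) % 3 = 2) with h' | h'
      · exact Or.inl ⟨h, h'⟩
      · refine Or.inr ⟨(-x, -y), ⟨?_, ?_⟩, by simp [hs]⟩
        · rw [mem_SS] at h ⊢; rw [← h]; ring
        · simp only; omega
    · rintro (h | ⟨⟨u, v⟩, ⟨h, _⟩, h2⟩)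
      · exact h.1
      · rw [← h2]
        rw [mem_SS] at h
        simp only [hs, mem_SS]
        rw [← h]; ring
  have h2 : Disjoint D (s '' D) := by
    rw [Set.disjoint_left]
    rintro ⟨x, y⟩ ⟨_, h⟩ ⟨⟨u, v⟩, ⟨_, h'⟩, h2⟩
    simp only [hs, Prod.mk.injEq] at h h' h2
    omega
  have h3 : D = CC k ∪ (r '' CC k ∪ r '' (r '' CC k)) := by
    ext ⟨x, y⟩
    constructor
    · rintro ⟨h, h'⟩
      rw [mem_SS] at h
      simp only at h'
      rcases (by omega : (0 < x + 2 * y ∧ 0 < 2 * x + y) ∨ (0 < -(2 * x + y) ∧ 0 < -(x - y)) ∨ (0 < x - y ∧ 0 < - (x + 2 * y))) with hh | hh | hh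
      · exact Or.inl ⟨h, h', hh⟩
      · refine Or.inr (Or.inl ⟨(y, -x-y), ⟨?_, ?_, ?_, ?_⟩, ?_⟩)
        · rw [mem_SS, ← h]; ring
        · simp only; omega
        · simp only; omega
        · simp only; omega
        · ext <;> simp [hr] <;> ring
      · refine Or.inr (Or.inr ⟨(y, -x-y), ⟨(-x-y, x), ⟨?_, ?_, ?_, ?_⟩, ?_⟩, ?_⟩)
        · rw [mem_SS, ← h]; ring
        · simp only; omega
        · simp only; omega
        · simp only; omega
        · ext <;> simp [hr] <;> ring
        · ext <;> simp [hr] <;> ring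
    · rintro (⟨h, h', _⟩ | ⟨⟨u, v⟩, ⟨h, h', _⟩, e⟩ | ⟨_, ⟨⟨u, v⟩, ⟨h, h', _⟩, rfl⟩, e⟩)
      · exact ⟨h, h'⟩
      all_goals
        simp only [hr, Prod.mk.injEq] at e h'
        obtain ⟨rfl, rfl⟩ := e
        refine ⟨?_, ?_⟩
        · rw [mem_SS] at h ⊢; rw [← h]; ring
        · simp only; omega
  have h4 : Disjoint (CC k) (r '' CC k ∪ r '' (r '' CC k)) := by
    rw [Set.disjoint_left]
    rintro ⟨x, y⟩ ⟨_, h, h1, h2⟩ (⟨⟨u, v⟩, ⟨_, h', h1', h2'⟩, e⟩ | ⟨_, ⟨⟨u, v⟩, ⟨_, h', h1', h2'⟩, rfl⟩, e⟩) <;>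
    · simp only [hr, Prod.mk.injEq] at *
      omega
  have h5 : Disjoint (r '' CC k) (r '' (r '' CC k)) := by
    rw [Set.disjoint_left]
    rintro _ ⟨⟨x, y⟩, ⟨_, h, h1, h2⟩, rfl⟩ ⟨_, ⟨⟨u, v⟩, ⟨_, h', h1', h2'⟩, rfl⟩, e⟩
    simp only [hr, Prod.mk.injEq] at *
    omega
  rw [h1, Set.ncard_union_eq h2 hDf (hDf.image _), Set.ncard_image_of_injective _ hsi, h3,
    Set.ncard_union_eq h4 hCf ((hCf.image _).union ((hCf.image _).image _)),
    Set.ncard_union_eq h5 (hCf.image _) ((hCf.image _).image _),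
    Set.ncard_image_of_injective _ hri, Set.ncard_image_of_injective _ hri,
    Set.ncard_image_of_injective _ hri]
  ring

lemma PP_rho (n : ℕ) : ((PP n).ncard : ℤ) = rho (3 * n + 1) := by
  have h1 := SS_rho (3 * n + 1) (by omega)
  have h2 := SS_CC (3 * n + 1) (by omega)
  rw [PP_CC]
  rw [h2] at h1
  push_cast at h1
  linarith

lemma PP_finite (n : ℕ) : (PP n).Finite := by
  refine Set.Finite.subset (Set.finite_Icc ((0 : ℕ), (0 : ℕ)) (2 * n, 2 * n)) ?_
  rintro ⟨p, q⟩ h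
  simp only [PP, Set.mem_ofPred_eq] at h
  simp only [Set.mem_Icc, Prod.mk_le_mk]
  have h' : (p : ℤ) ^ 2 + q ^ 2 + q = n + p * q := by exact_mod_cast h
  have hp0 : (0:ℤ) ≤ p := by positivity
  have hq0 : (0:ℤ) ≤ q := by positivity
  have a1 : (q : ℤ) ≤ n := by nlinarith [sq_nonneg ((p:ℤ) - q), mul_nonneg hp0 hq0]
  have a2 : (p : ℤ) ≤ 2 * n := by nlinarith [sq_nonneg ((p:ℤ) - 2 * q), sq_nonneg ((p:ℤ) - 1), sq_nonneg ((p:ℤ) - q)]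
  omega
lemma lt_col_iff (μ : YoungDiagram) (i : ℕ) : i < μ.colLen 0 ↔ 0 < μ.rowLen i := by
  rw [← YoungDiagram.mem_iff_lt_colLen, YoungDiagram.mem_iff_lt_rowLen]

/-- first column hook lengths -/
def beta (μ : YoungDiagram) : Finset ℕ :=
  (Finset.range (μ.colLen 0)).image (fun i => μ.rowLen i + (μ.colLen 0 - 1 - i))

lemma mem_beta (μ : YoungDiagram) (x : ℕ) : x ∈ beta μ ↔
    ∃ i < μ.colLen 0, μ.rowLen i + (μ.colLen 0 - 1 - i) = x := by
  simp [beta]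

lemma beta_injOn (μ : YoungDiagram) : Set.InjOn (fun i => μ.rowLen i + (μ.colLen 0 - 1 - i))
    (Finset.range (μ.colLen 0) : Set ℕ) := by
  intro i hi j hj h
  simp only [Finset.coe_range, Set.mem_Iio] at hi hj h
  rcases lt_trichotomy i j with hij | hij | hij
  · have := μ.rowLen_anti i j hij.le
    omega
  · exact hij
  · have := μ.rowLen_anti j i hij.le
    omega

lemma beta_card (μ : YoungDiagram) : (beta μ).card = μ.colLen 0 := by
  rw [beta, Finset.card_image_of_injOn (beta_injOn μ), Finset.card_range]

lemma card_eq_sum (μ : YoungDiagram) : μ.card = ∑ i ∈ Finset.range (μ.colLen 0), μ.rowLen i := by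
  have := Finset.card_eq_sum_card_fiberwise (s := μ.cells) (t := Finset.range (μ.colLen 0)) (f := Prod.fst) (by
    rintro ⟨i, j⟩ h
    simp only [Finset.mem_coe, YoungDiagram.mem_cells] at h
    simp only [Finset.coe_range, Set.mem_Iio]
    rw [lt_col_iff]
    rw [YoungDiagram.mem_iff_lt_rowLen] at h
    omega)
  rw [YoungDiagram.card, this]
  refine Finset.sum_congr rfl fun i _ => ?_
  rw [YoungDiagram.rowLen_eq_card]; rfl

lemma beta_sum (μ : YoungDiagram) : ∑ x ∈ beta μ, x = μ.card + ∑ i ∈ Finset.range (μ.colLen 0), i := by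
  rw [beta, Finset.sum_image (beta_injOn μ), Finset.sum_add_distrib, ← card_eq_sum,
    Finset.sum_range_reflect (fun i => i)]

lemma zero_notMem_beta (μ : YoungDiagram) : 0 ∉ beta μ := by
  rw [mem_beta]
  rintro ⟨i, hi, h⟩
  rw [lt_col_iff] at hi
  omega

lemma beta_inj (μ ν : YoungDiagram) (h : beta μ = beta ν) : μ = ν := by
  have hl : μ.colLen 0 = ν.colLen 0 := by rw [← beta_card, ← beta_card, h]
  have key : ∀ (κ : YoungDiagram) (l : ℕ) (hk : κ.colLen 0 = l),
      StrictMono (fun i : Fin l => κ.rowLen (l - 1 - i) + i) ∧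
      ∀ i : Fin l, κ.rowLen (l - 1 - i) + i ∈ beta κ := by
    intro κ l hk
    constructor
    · intro i j hij
      have : (i : ℕ) < j := hij
      have := κ.rowLen_anti (l - 1 - j) (l - 1 - i) (by omega)
      simp only; omega
    · intro i
      rw [mem_beta]
      refine ⟨l - 1 - i, by omega, by omega⟩
  obtain ⟨a1, a2⟩ := key μ _ rfl
  obtain ⟨b1, b2⟩ := key ν _ hl.symm
  have c1 := Finset.orderEmbOfFin_unique (beta_card μ) a2 a1
  have c2 := Finset.orderEmbOfFin_unique (beta_card μ) (h ▸ b2) b1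
  have hrow : ∀ i, μ.rowLen i = ν.rowLen i := by
    intro i
    by_cases hi : i < μ.colLen 0
    · have e := congrFun (c1.trans c2.symm) ⟨μ.colLen 0 - 1 - i, by omega⟩
      simp only at e
      rw [show μ.colLen 0 - 1 - (μ.colLen 0 - 1 - i) = i by omega] at e
      omega
    · have hi' := hi
      rw [lt_col_iff] at hi
      rw [hl, lt_col_iff] at hi'
      omega
  apply YoungDiagram.ext
  ext ⟨i, j⟩
  rw [YoungDiagram.mem_cells, YoungDiagram.mem_cells, YoungDiagram.mem_iff_lt_rowLen,
    YoungDiagram.mem_iff_lt_rowLen, hrow]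

lemma exists_young (w : ℕ → ℕ) (l : ℕ) (hw : Antitone w) (hl : ∀ i, i < l ↔ 0 < w i) :
    ∃ μ : YoungDiagram, μ.colLen 0 = l ∧ ∀ i, μ.rowLen i = w i := by
  let c : Finset (ℕ × ℕ) := (Finset.range l ×ˢ Finset.range (w 0)).filter (fun c => c.2 < w c.1)
  have hc : ∀ i j, (i, j) ∈ c ↔ j < w i := by
    intro i j
    simp only [c, Finset.mem_filter, Finset.mem_product, Finset.mem_range]
    constructor
    · exact fun h => h.2
    · intro h
      have := hw (Nat.zero_le i)
      exact ⟨⟨(hl i).2 (by omega), by omega⟩, h⟩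
  let μ : YoungDiagram := ⟨c, by
    rintro ⟨i, j⟩ ⟨i', j'⟩ ⟨h1, h2⟩ h
    simp only [Finset.mem_coe, hc] at h h1 h2 ⊢
    have := hw h1
    omega⟩
  have hμ : ∀ i j, (i, j) ∈ μ ↔ j < w i := fun i j => hc i j
  have hr : ∀ i, μ.rowLen i = w i := by
    intro i
    have h : ∀ j, j < μ.rowLen i ↔ j < w i := fun j => by
      rw [← YoungDiagram.mem_iff_lt_rowLen, hμ]
    have h1 := h (w i)
    have h2 := h (μ.rowLen i)
    omega
  refine ⟨μ, ?_, hr⟩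
  have h : ∀ i, i < μ.colLen 0 ↔ i < l := fun i => by rw [lt_col_iff, hr, hl]
  have h1 := h l
  have h2 := h (μ.colLen 0)
  omega

lemma exists_beta (X : Finset ℕ) (h0 : 0 ∉ X) : ∃ μ, beta μ = X := by
  set l := X.card with hl
  let e := X.orderEmbOfFin hl.symm
  have hge : ∀ (k : ℕ) (hk : k < l), k + 1 ≤ e ⟨k, hk⟩ := by
    intro k
    induction k with
    | zero =>
      intro hk
      have : e ⟨0, hk⟩ ∈ X := X.orderEmbOfFin_mem _ _
      rcases Nat.eq_zero_or_pos (e ⟨0, hk⟩) with h | h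
      · rw [h] at this; exact absurd this h0
      · omega
    | succ k ih =>
      intro hk
      have h1 := ih (by omega)
      have h2 : e ⟨k, by omega⟩ < e ⟨k+1, hk⟩ := e.strictMono (by simp)
      omega
  have hdiff : ∀ (d k : ℕ) (hk : k + d < l), e ⟨k, by omega⟩ + d ≤ e ⟨k + d, hk⟩ := by
    intro d k
    induction d with
    | zero => intro hk; simp
    | succ d ih =>
      intro hk
      have h1 := ih (by omega)
      have h2 : e ⟨k + d, by omega⟩ < e ⟨k+(d+1), hk⟩ := e.strictMono (by simp)
      omega
  let w : ℕ → ℕ := fun i => if h : i < l then e ⟨l - 1 - i, by omega⟩ - (l - 1 - i) else 0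
  have hw1 : ∀ i (h : i < l), w i = e ⟨l - 1 - i, by omega⟩ - (l - 1 - i) := fun i h => dif_pos h
  have hw2 : ∀ i (h : ¬ i < l), w i = 0 := fun i h => dif_neg h
  obtain ⟨μ, hμ1, hμ2⟩ := exists_young w l (by
    intro i j hij
    by_cases hj : j < l
    · rw [hw1 j hj, hw1 i (by omega)]
      have := hdiff (j - i) (l - 1 - j) (by omega)
      have e1 : l - 1 - j + (j - i) = l - 1 - i := by omega
      simp only [e1] at this
      omega
    · rw [hw2 j hj]; omega) (by
    intro i
    by_cases hi : i < l
    · rw [hw1 i hi]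
      have := hge (l - 1 - i) (by omega)
      omega
    · rw [hw2 i hi]; omega)
  refine ⟨μ, ?_⟩
  refine Finset.eq_of_subset_of_card_le ?_ (by rw [beta_card, hμ1])
  intro x hx
  rw [mem_beta, hμ1] at hx
  obtain ⟨i, hi, rfl⟩ := hx
  rw [hμ2, hw1 i hi]
  have := hge (l - 1 - i) (by omega)
  rw [Nat.sub_add_cancel (by omega)]
  exact X.orderEmbOfFin_mem _ _

lemma core_iff (μ : YoungDiagram) : μ.IsThreeCore ↔ ∀ x, x + 3 ∈ beta μ → x ∈ beta μ := by
  constructor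
  · intro hc x hx
    by_contra hx'
    rw [mem_beta] at hx hx'
    obtain ⟨i, hi, hix⟩ := hx
    push Not at hx'
    set l := μ.colLen 0 with hl
    have hex : ∃ m, μ.rowLen m + l ≤ x + 1 + m := by
      refine ⟨l, ?_⟩
      have : ¬ 0 < μ.rowLen l := by rw [← lt_col_iff]; omega
      omega
    set m := Nat.find hex with hm
    have hm1 : μ.rowLen m + l ≤ x + 1 + m := Nat.find_spec hex
    have hm2 : ∀ m' < m, x + 1 + m' < μ.rowLen m' + l := fun m' h => not_le.1 (Nat.find_min hex h)
    have hml : m ≤ l := by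
      refine Nat.find_min' hex ?_
      have : ¬ 0 < μ.rowLen l := by rw [← lt_col_iff]; omega
      omega
    have him : i < m := by
      by_contra h
      have := μ.rowLen_anti m i (by omega)
      omega
    have hm3 : m < l → μ.rowLen m + l < x + 1 + m ∧ 0 < μ.rowLen m := by
      intro h
      have := hx' m h
      have h2 := (lt_col_iff μ m).1 h
      omega
    have hm4 : m = l → μ.rowLen m = 0 := by
      intro h
      have : ¬ 0 < μ.rowLen l := by rw [← lt_col_iff]; omega
      rw [h]; omega
    obtain ⟨j, hj⟩ : ∃ j, j + l = x + m := ⟨x + m - l, by omega⟩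
    have hrm : μ.rowLen m ≤ j := by omega
    have hrm' : j < μ.rowLen (m - 1) := by
      have := hm2 (m - 1) (by omega)
      omega
    have hcol : μ.colLen j = m := by
      have h1 : ¬ m < μ.colLen j := by
        rw [← YoungDiagram.mem_iff_lt_colLen, YoungDiagram.mem_iff_lt_rowLen]; omega
      have h2 : m - 1 < μ.colLen j := by
        rw [← YoungDiagram.mem_iff_lt_colLen, YoungDiagram.mem_iff_lt_rowLen]; omega
      omega
    have hij : (i, j) ∈ μ := by
      rw [YoungDiagram.mem_iff_lt_colLen]; omega
    refine hc (i, j) ((YoungDiagram.mem_cells _).2 hij) ?_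
    have : μ.hookLength i j = 3 := by
      unfold YoungDiagram.hookLength
      omega
    simp only [this]; exact dvd_refl _
  · rintro hX ⟨i, j⟩ hij ⟨k, hk⟩
    rw [YoungDiagram.mem_cells] at hij
    have h1 := YoungDiagram.mem_iff_lt_rowLen.1 hij
    have h2 := YoungDiagram.mem_iff_lt_colLen.1 hij
    simp only [YoungDiagram.hookLength] at hk
    have h3 := μ.colLen_anti 0 j (Nat.zero_le _)
    have hcl : ∀ (t x : ℕ), x + 3 * t ∈ beta μ → x ∈ beta μ := by
      intro t
      induction t with
      | zero => intro x h; exact h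
      | succ t ih =>
        intro x h
        exact hX _ (ih (x + 3) (by convert h using 1; ring))
    have h4 : j + (μ.colLen 0 - μ.colLen j) ∈ beta μ := by
      apply hcl k
      rw [mem_beta]
      exact ⟨i, by omega, by omega⟩
    rw [mem_beta] at h4
    obtain ⟨i', hi', h5⟩ := h4
    by_cases h6 : i' < μ.colLen j
    · have h7 := YoungDiagram.mem_iff_lt_rowLen.1 (YoungDiagram.mem_iff_lt_colLen.2 h6)
      omega
    · have h7 : ¬ j < μ.rowLen i' := by
        rw [← YoungDiagram.mem_iff_lt_rowLen, YoungDiagram.mem_iff_lt_colLen]; exact h6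
      omega

/-- the finite set attached to a pair -/
def Xpq (v : ℕ × ℕ) : Finset ℕ :=
  (Finset.range v.1).image (fun i => 3 * i + 1) ∪ (Finset.range v.2).image (fun i => 3 * i + 2)

lemma mem_Xpq (v : ℕ × ℕ) (x : ℕ) : x ∈ Xpq v ↔
    (x % 3 = 1 ∧ x < 3 * v.1 + 1) ∨ (x % 3 = 2 ∧ x < 3 * v.2 + 2) := by
  simp only [Xpq, Finset.mem_union, Finset.mem_image, Finset.mem_range]
  constructor
  · rintro (⟨i, hi, rfl⟩ | ⟨i, hi, rfl⟩) <;> omega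
  · rintro (⟨h, h'⟩ | ⟨h, h'⟩)
    · exact Or.inl ⟨x / 3, by omega, by omega⟩
    · exact Or.inr ⟨x / 3, by omega, by omega⟩

lemma Xpq_inj : Function.Injective Xpq := by
  rintro ⟨p, q⟩ ⟨p', q'⟩ h
  have h1 : ∀ x, x ∈ Xpq (p, q) ↔ x ∈ Xpq (p', q') := fun x => by rw [h]
  simp only [mem_Xpq] at h1
  have a := h1 (3 * p + 1)
  have b := h1 (3 * p' + 1)
  have c := h1 (3 * q + 2)
  have d := h1 (3 * q' + 2)
  rw [Prod.mk.injEq]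
  omega

lemma run_exists (X : Finset ℕ) (hX : ∀ x, x + 3 ∈ X → x ∈ X) (r : ℕ) :
    ∃ p, ∀ i, 3 * i + r ∈ X ↔ i < p := by
  have hex : ∃ p, 3 * p + r ∉ X := by
    refine ⟨X.sup id + 1, fun h => ?_⟩
    have := Finset.le_sup (f := id) h
    simp only [id] at this
    omega
  refine ⟨Nat.find hex, fun i => ⟨fun h => ?_, fun h => ?_⟩⟩
  · by_contra hlt
    have hcl : ∀ t, 3 * (Nat.find hex + t) + r ∉ X := by
      intro t
      induction t with
      | zero => exact Nat.find_spec hex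
      | succ t ih =>
        intro h
        exact ih (hX _ (by convert h using 1; ring))
    apply hcl (i - Nat.find hex)
    rwa [Nat.add_sub_cancel' (by omega)]
  · exact not_not.1 (Nat.find_min hex h)

lemma exists_Xpq (X : Finset ℕ) (h0 : 0 ∉ X) (hX : ∀ x, x + 3 ∈ X → x ∈ X) : ∃ v, Xpq v = X := by
  obtain ⟨o, ho⟩ := run_exists X hX 0
  obtain ⟨p, hp⟩ := run_exists X hX 1
  obtain ⟨q, hq⟩ := run_exists X hX 2
  refine ⟨(p, q), ?_⟩
  ext x
  rw [mem_Xpq]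
  have ho0 : o = 0 := by
    have := ho 0
    simp only [mul_zero, add_zero] at this
    by_contra h
    exact h0 (this.2 (by omega))
  rcases (by omega : x % 3 = 0 ∨ x % 3 = 1 ∨ x % 3 = 2) with h | h | h
  · have := ho (x / 3)
    rw [show 3 * (x / 3) + 0 = x by omega] at this
    rw [this]; omega
  · have := hp (x / 3)
    rw [show 3 * (x / 3) + 1 = x by omega] at this
    rw [this]; simp only; omega
  · have := hq (x / 3)
    rw [show 3 * (x / 3) + 2 = x by omega] at this
    rw [this]; simp only; omega

lemma Xpq_disj (v : ℕ × ℕ) : Disjoint ((Finset.range v.1).image (fun i => 3 * i + 1))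
    ((Finset.range v.2).image (fun i => 3 * i + 2)) := by
  rw [Finset.disjoint_left]
  intro x h h'
  simp only [Finset.mem_image, Finset.mem_range] at h h'
  obtain ⟨i, _, rfl⟩ := h
  obtain ⟨j, _, h⟩ := h'
  omega

lemma Xpq_card (v : ℕ × ℕ) : (Xpq v).card = v.1 + v.2 := by
  rw [Xpq, Finset.card_union_of_disjoint (Xpq_disj v), Finset.card_image_of_injective,
    Finset.card_image_of_injective, Finset.card_range, Finset.card_range]
  · intro a b h; simp only at h; omega
  · intro a b h; simp only at h; omega

lemma Xpq_sum (v : ℕ × ℕ) : 2 * ∑ x ∈ Xpq v, x + v.1 = 3 * v.1 ^ 2 + 3 * v.2 ^ 2 + v.2 := by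
  have h1 : ∀ p : ℕ, 2 * ∑ i ∈ Finset.range p, (3 * i + 1) + p = 3 * p ^ 2 := by
    intro p
    induction p with
    | zero => simp
    | succ p ih => rw [Finset.sum_range_succ]; nlinarith
  have h2 : ∀ p : ℕ, 2 * ∑ i ∈ Finset.range p, (3 * i + 2) = 3 * p ^ 2 + p := by
    intro p
    induction p with
    | zero => simp
    | succ p ih => rw [Finset.sum_range_succ]; nlinarith
  rw [Xpq, Finset.sum_union (Xpq_disj v), Finset.sum_image, Finset.sum_image]
  · linarith [h1 v.1, h2 v.2]
  · intro a _ b _ h; simp only at h; omega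
  · intro a _ b _ h; simp only at h; omega

lemma tri_sum (l : ℕ) : 2 * ∑ i ∈ Finset.range l, i + l = l ^ 2 := by
  induction l with
  | zero => simp
  | succ p ih => rw [Finset.sum_range_succ]; nlinarith

lemma exists_G : ∃ G : ℕ × ℕ → YoungDiagram, Function.Injective G ∧
    (∀ μ : YoungDiagram, μ.IsThreeCore ↔ ∃ v, G v = μ) ∧
    ∀ v, v.1 ^ 2 + v.2 ^ 2 + v.2 = (G v).card + v.1 * v.2 := by
  have h : ∀ v, ∃ μ, beta μ = Xpq v := fun v => exists_beta _ (by rw [mem_Xpq]; omega)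
  choose G hG using h
  refine ⟨G, ?_, ?_, ?_⟩
  · intro v w hvw
    apply Xpq_inj
    rw [← hG, ← hG, hvw]
  · intro μ
    rw [core_iff]
    constructor
    · intro h
      obtain ⟨v, hv⟩ := exists_Xpq (beta μ) (zero_notMem_beta μ) h
      exact ⟨v, beta_inj _ _ (by rw [hG, hv])⟩
    · rintro ⟨v, rfl⟩ x
      rw [hG, mem_Xpq, mem_Xpq]
      omega
  · intro v
    have h1 := beta_sum (G v)
    have h2 := beta_card (G v)
    rw [hG] at h1 h2
    rw [Xpq_card] at h2
    have h3 := Xpq_sum v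
    have h4 := tri_sum (G v).card
    have h5 := tri_sum ((G v).colLen 0)
    rw [← h2] at h5 h1
    nlinarith

/-- For every n ≥ 0, 3·A₃(n) = σ(3n+2). -/
theorem three_mul_A3_eq_sigma (n : ℕ) :
    3 * A3 n = ∑ d ∈ (3 * n + 2).divisors, d := by
  obtain ⟨G, hGi, hGc, hGs⟩ := exists_G
  have hPP : ∀ v k, v ∈ PP k ↔ (G v).card = k := by
    intro v k
    have := hGs v
    simp only [PP, Set.mem_ofPred_eq]
    omega
  let F : ℕ → Finset (ℕ × ℕ) := fun k => (PP_finite k).toFinset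
  have hF : ∀ v k, v ∈ F k ↔ (G v).card = k := fun v k => by
    rw [← hPP]; exact Set.Finite.mem_toFinset _
  let W : Finset ((ℕ × ℕ) × (ℕ × ℕ)) :=
    (Finset.HasAntidiagonal.antidiagonal n).biUnion (fun k => F k.1 ×ˢ F k.2)
  have hW : ∀ w, w ∈ W ↔ (G w.1).card + (G w.2).card = n := by
    rintro ⟨v, w⟩
    simp only [W, Finset.mem_biUnion, Finset.mem_product, hF, Finset.HasAntidiagonal.mem_antidiagonal]
    constructor
    · rintro ⟨k, h, h1, h2⟩; omega
    · intro h; exact ⟨(_, _), h, rfl, rfl⟩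
  have h1 : A3 n = W.card := by
    have e : {p : YoungDiagram × YoungDiagram | p.1.card + p.2.card = n ∧ p.1.IsThreeCore ∧ p.2.IsThreeCore}
        = Prod.map G G '' (W : Set ((ℕ × ℕ) × (ℕ × ℕ))) := by
      ext ⟨μ, ν⟩
      constructor
      · rintro ⟨h, h1, h2⟩
        obtain ⟨v, rfl⟩ := (hGc _).1 h1
        obtain ⟨w, rfl⟩ := (hGc _).1 h2
        exact ⟨(v, w), Finset.mem_coe.2 ((hW _).2 h), rfl⟩
      · rintro ⟨⟨v, w⟩, h, h2⟩
        rw [← h2]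
        exact ⟨(hW _).1 (Finset.mem_coe.1 h), (hGc _).2 ⟨v, rfl⟩, (hGc _).2 ⟨w, rfl⟩⟩
    have e2 : A3 n = {p : YoungDiagram × YoungDiagram | p.1.card + p.2.card = n ∧ p.1.IsThreeCore ∧ p.2.IsThreeCore}.ncard := rfl
    rw [e2, e, Set.ncard_image_of_injective _ (Function.Injective.prodMap hGi hGi), Set.ncard_coe_finset]
  have h2 : W.card = ∑ k ∈ Finset.HasAntidiagonal.antidiagonal n, (F k.1).card * (F k.2).card := by
    rw [Finset.card_biUnion]
    · simp only [Finset.card_product]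
    · rintro ⟨i, j⟩ _ ⟨i', j'⟩ _ hne
      rw [Function.onFun, Finset.disjoint_left]
      rintro ⟨v, w⟩ h h'
      simp only [Finset.mem_product, hF] at h h'
      apply hne
      rw [Prod.mk.injEq]; omega
  have h3 : ∀ k, ((F k).card : ℤ) = rho (3 * k + 1) := by
    intro k
    rw [← PP_rho, Set.ncard_eq_toFinset_card _ (PP_finite k)]
  have h4 := rho_conv n
  simp only [← h3] at h4
  rw [h1, h2]
  zify
  exact h4
end

section
/- Let n ≥ 0 be an integer and write 3n+2 = ∏_{i=1}^{s} p_i^{α_i} as its prime factorization into distinct primes p_i with exponents α_i ≥ 1. Then 3·A_3(n)·∏_{i=1}^{s}(p_i − 1) = ∏_{i=1}^{s}(p_i^{α_i+1} − 1), i.e., A_3(n) = (1/3)·∏_{i=1}^{s} (p_i^{α_i+1} − 1)/(p_i − 1). -/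
namespace TC
abbrev OQ := QuaternionAlgebra ℤ (-1) (-1) (-1)

def nQ (g : OQ) : ℤ := g.re^2 - g.re*g.imI + g.imI^2 + g.imJ^2 - g.imJ*g.imK + g.imK^2

lemma nQ_mul (g h : OQ) : nQ (g*h) = nQ g * nQ h := by
  simp only [nQ, QuaternionAlgebra.re_mul, QuaternionAlgebra.imI_mul, QuaternionAlgebra.imJ_mul, QuaternionAlgebra.imK_mul]
  ring

lemma nQ_star (g : OQ) : nQ (star g) = nQ g := by
  simp [nQ]
  ring

lemma mul_star_nQ (g : OQ) : g * star g = ((nQ g : ℤ) : OQ) := by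
  ext <;> simp <;> (try unfold nQ) <;> ring

lemma star_mul_nQ (g : OQ) : star g * g = ((nQ g : ℤ) : OQ) := by
  ext <;> simp <;> (try unfold nQ) <;> ring

lemma nQ_nonneg (g : OQ) : 0 ≤ nQ g := by
  unfold nQ
  nlinarith [sq_nonneg (2*g.re - g.imI), sq_nonneg (2*g.imJ - g.imK), sq_nonneg g.imI, sq_nonneg g.imK]

lemma nQ_bound (g : OQ) : g.re^2 ≤ 4 * nQ g ∧ g.imI^2 ≤ 4 * nQ g ∧ g.imJ^2 ≤ 4 * nQ g ∧ g.imK^2 ≤ 4 * nQ g := by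
  unfold nQ
  refine ⟨?_, ?_, ?_, ?_⟩ <;>
  nlinarith [sq_nonneg (2*g.re - g.imI), sq_nonneg (2*g.imJ - g.imK), sq_nonneg g.imI, sq_nonneg g.imK,
    sq_nonneg (2*g.imI - g.re), sq_nonneg (2*g.imK - g.imJ), sq_nonneg g.re, sq_nonneg g.imJ]

lemma nQ_eq_zero {g : OQ} (h : nQ g = 0) : g = 0 := by
  have := nQ_bound g
  rw [h] at this
  obtain ⟨h1, h2, h3, h4⟩ := this
  ext <;> simp <;> nlinarith

lemma nQ_smulint (n : ℤ) (g : OQ) : nQ ((n : OQ) * g) = n^2 * nQ g := by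
  rw [nQ_mul]; simp [nQ]

lemma rnd_one (n : ℤ) (hn : 0 < n) (x : ℤ) : ∃ q, -n ≤ 2 * (x - n*q) ∧ 2 * (x - n*q) ≤ n := by
  refine ⟨(2*x+n)/(2*n), ?_⟩
  have h1 := Int.mul_ediv_add_emod (2*x+n) (2*n)
  have h2 := Int.emod_nonneg (2*x+n) (by omega : 2*n ≠ 0)
  have h3 := Int.emod_lt_of_pos (2*x+n) (by omega : 0 < 2*n)
  constructor <;> nlinarith

lemma rnd_two (n : ℤ) (hn : 0 < n) (x y : ℤ) : ∃ q r, 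
    16 * ((x-n*q)^2 - (x-n*q)*(y-n*r) + (y-n*r)^2) ≤ 7 * n^2 := by
  obtain ⟨r, h1, h2⟩ := rnd_one n hn y
  obtain ⟨q, h3, h4⟩ := rnd_one (2*n) (by omega) (2*x - (y-n*r))
  refine ⟨q, r, ?_⟩
  have e1 : 4 * (y-n*r)^2 ≤ n^2 := by nlinarith
  have e2 : (2*(x-n*q) - (y-n*r))^2 ≤ n^2 := by nlinarith
  nlinarith

lemma euclid (g h : OQ) (hh : h ≠ 0) : ∃ q : OQ, nQ (g - q * h) < nQ h := by
  have hn : 0 < nQ h := lt_of_le_of_ne (nQ_nonneg h) (fun e => hh (nQ_eq_zero e.symm))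
  set n := nQ h with hnd
  set z := g * star h with hz
  obtain ⟨q1, q2, h1⟩ := rnd_two n hn z.re z.imI
  obtain ⟨q3, q4, h2⟩ := rnd_two n hn z.imJ z.imK
  refine ⟨⟨q1,q2,q3,q4⟩, ?_⟩
  set q : OQ := ⟨q1,q2,q3,q4⟩ with hq
  have e : (g - q*h) * star h = z - (n:OQ) * q := by
    rw [sub_mul, mul_assoc, mul_star_nQ, ← hz, ← hnd, (Int.cast_commute n q).eq]
  have e2 : nQ (g - q*h) * n = nQ (z - (n:OQ)*q) := by
    rw [← e, nQ_mul, nQ_star]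
  have e3 : 16 * nQ (z - (n:OQ)*q) ≤ 14 * n^2 := by
    simp [nQ, hq]
    linarith
  nlinarith

lemma principal (I : Submodule OQ OQ) (hI : ∃ g ∈ I, g ≠ 0) : ∃ π ∈ I, π ≠ 0 ∧ ∀ g ∈ I, ∃ d, g = d * π := by
  classical
  have hex : ∃ k : ℕ, ∃ g ∈ I, g ≠ 0 ∧ (nQ g).toNat = k := by
    obtain ⟨g, h1, h2⟩ := hI
    exact ⟨_, g, h1, h2, rfl⟩
  obtain ⟨π, h1, h2, h3⟩ := Nat.find_spec hex
  refine ⟨π, h1, h2, fun g hg => ?_⟩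
  obtain ⟨q, hq⟩ := euclid g π h2
  refine ⟨q, ?_⟩
  by_contra hne
  have := Nat.find_min hex (m := (nQ (g - q*π)).toNat) (by rw [← h3]; have := nQ_nonneg (g-q*π); omega)
  apply this
  exact ⟨_, I.sub_mem hg (I.smul_mem q h1), sub_ne_zero.2 hne, rfl⟩

lemma finR (m : ℤ) : {g : OQ | nQ g = m}.Finite := by
  have hf : (Set.Icc (-(4*m)) (4*m) ×ˢ Set.Icc (-(4*m)) (4*m) ×ˢ Set.Icc (-(4*m)) (4*m) ×ˢ Set.Icc (-(4*m)) (4*m)).Finite := by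
    refine Set.Finite.prod (Set.finite_Icc _ _) (Set.Finite.prod (Set.finite_Icc _ _) (Set.Finite.prod (Set.finite_Icc _ _) (Set.finite_Icc _ _)))
  refine Set.Finite.of_finite_image (f := fun g : OQ => (g.re, g.imI, g.imJ, g.imK)) (hf.subset ?_) ?_
  · rintro _ ⟨g, hg, rfl⟩
    obtain ⟨h1, h2, h3, h4⟩ := nQ_bound g
    have key : ∀ x : ℤ, x^2 ≤ 4 * nQ g → x ∈ Set.Icc (-(4*m)) (4*m) := by
      intro x hx
      rw [show nQ g = m from hg] at hx
      constructor <;> nlinarith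
    exact ⟨key _ h1, key _ h2, key _ h3, key _ h4⟩
  · intro g _ h _ e
    simp only [Prod.mk.injEq] at e
    ext <;> simp [e]

noncomputable def RF (m : ℤ) : Finset OQ := (finR m).toFinset
lemma mem_RF {m : ℤ} {g : OQ} : g ∈ RF m ↔ nQ g = m := by simp [RF]
end TC
namespace TC
section
variable {p : ℕ} [Fact p.Prime] (a b : ZMod p)

lemma exists_ab (p : ℕ) [Fact p.Prime] (h3 : p ≠ 3) : ∃ a b : ZMod p, a^2+a*b+b^2 = -1 := by
  have hp : p.Prime := Fact.out
  rcases hp.eq_two_or_odd with rfl | hodd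
  · exact ⟨1, 0, by ring_nf; rfl⟩
  · have h30 : (3 : ZMod p) ≠ 0 := by
      intro h
      have : ((3:ℕ) : ZMod p) = 0 := by exact_mod_cast h
      rw [ZMod.natCast_eq_zero_iff] at this
      exact h3 ((Nat.prime_dvd_prime_iff_eq hp Nat.prime_three).1 this)
    have h20 : (2 : ZMod p) ≠ 0 := by
      intro h
      have : ((2:ℕ) : ZMod p) = 0 := by exact_mod_cast h
      rw [ZMod.natCast_eq_zero_iff] at this
      have := (Nat.prime_dvd_prime_iff_eq hp Nat.prime_two).1 this
      omega
    obtain ⟨u, v, h⟩ := FiniteField.exists_root_sum_quadratic (R := ZMod p)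
      (f := Polynomial.C 1 * Polynomial.X^2 + Polynomial.C 0 * Polynomial.X + Polynomial.C 4) (g := Polynomial.C 3 * Polynomial.X^2 + Polynomial.C 0 * Polynomial.X + Polynomial.C 0)
      (Polynomial.degree_quadratic one_ne_zero) (Polynomial.degree_quadratic h30) (by rw [ZMod.card]; exact hodd)
    simp at h
    refine ⟨(u - v)/2, v, ?_⟩
    field_simp
    linear_combination h

/-- the four matrix entries -/
def m11 (g : OQ) : ZMod p := g.re + a * g.imJ - (a+b) * g.imK
def m12 (g : OQ) : ZMod p := -g.imI + b * g.imJ + a * g.imK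
def m21 (g : OQ) : ZMod p := g.imI + (a+b) * g.imJ - b * g.imK
def m22 (g : OQ) : ZMod p := g.re - g.imI - a * g.imJ + (a+b) * g.imK

variable {a b}

lemma m11_mul (h : a^2+a*b+b^2 = -1) (g k : OQ) : m11 a b (g*k) = m11 a b g * m11 a b k + m12 a b g * m21 a b k := by
  simp [m11, m12, m21, m22]
  grind
lemma m12_mul (h : a^2+a*b+b^2 = -1) (g k : OQ) : m12 a b (g*k) = m11 a b g * m12 a b k + m12 a b g * m22 a b k := by
  simp [m11, m12, m21, m22]
  grind
lemma m21_mul (h : a^2+a*b+b^2 = -1) (g k : OQ) : m21 a b (g*k) = m21 a b g * m11 a b k + m22 a b g * m21 a b k := by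
  simp [m11, m12, m21, m22]
  grind
lemma m22_mul (h : a^2+a*b+b^2 = -1) (g k : OQ) : m22 a b (g*k) = m21 a b g * m12 a b k + m22 a b g * m22 a b k := by
  simp [m11, m12, m21, m22]
  grind

lemma det_m (h : a^2+a*b+b^2 = -1) (g : OQ) : m11 a b g * m22 a b g - m12 a b g * m21 a b g = (nQ g : ZMod p) := by
  simp [m11, m12, m21, m22, nQ]
  grind

lemma ker_m (h : a^2+a*b+b^2 = -1) (h3 : (3 : ZMod p) ≠ 0) (g : OQ) (h11 : m11 a b g = 0) (h12 : m12 a b g = 0)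
    (h21 : m21 a b g = 0) (h22 : m22 a b g = 0) : ∃ d : OQ, g = ((p:ℤ) : OQ) * d := by
  simp only [m11, m12, m21, m22] at *
  have hz : (g.imJ : ZMod p) = 0 := by
    apply mul_left_cancel₀ h3
    grind
  have hw : (g.imK : ZMod p) = 0 := by
    apply mul_left_cancel₀ h3
    grind
  rw [hz, hw] at h21 h11
  have hy : (g.imI : ZMod p) = 0 := by linear_combination h21
  have hx : (g.re : ZMod p) = 0 := by linear_combination h11
  rw [ZMod.intCast_zmod_eq_zero_iff_dvd] at hx hy hz hw
  obtain ⟨x, hx⟩ := hx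
  obtain ⟨y, hy⟩ := hy
  obtain ⟨z, hz⟩ := hz
  obtain ⟨w, hw⟩ := hw
  refine ⟨⟨x,y,z,w⟩, ?_⟩
  ext <;> simp [*]

lemma surj_m (h : a^2+a*b+b^2 = -1) (h3 : (3 : ZMod p) ≠ 0) (x11 x12 x21 x22 : ZMod p) : ∃ g : OQ,
    m11 a b g = x11 ∧ m12 a b g = x12 ∧ m21 a b g = x21 ∧ m22 a b g = x22 := by
  obtain ⟨i, hi⟩ : ∃ i : ZMod p, 3 * i = 1 := ⟨3⁻¹, mul_inv_cancel₀ h3⟩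
  obtain ⟨z, hz⟩ := ZMod.intCast_surjective (i * (-(a+2*b)*(x12+x21) - (a-b)*(x11-x22+x12)))
  obtain ⟨w, hw⟩ := ZMod.intCast_surjective (i * ((a+2*b)*(x11-x22+x12) - (2*a+b)*(x12+x21)))
  obtain ⟨y, hy⟩ := ZMod.intCast_surjective (x21 - (a+b)*(z : ZMod p) + b * (w : ZMod p))
  obtain ⟨x, hx⟩ := ZMod.intCast_surjective (x11 - a * (z : ZMod p) + (a+b) * (w : ZMod p))
  refine ⟨⟨x,y,z,w⟩, ?_⟩
  simp only [m11, m12, m21, m22]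
  rw [hx, hy]
  have hz' : 3 * (z : ZMod p) = (-(a+2*b)*(x12+x21) - (a-b)*(x11-x22+x12)) := by rw [hz]; linear_combination (-(a+2*b)*(x12+x21) - (a-b)*(x11-x22+x12)) * hi
  have hw' : 3 * (w : ZMod p) = ((a+2*b)*(x11-x22+x12) - (2*a+b)*(x12+x21)) := by rw [hw]; linear_combination ((a+2*b)*(x11-x22+x12) - (2*a+b)*(x12+x21)) * hi
  refine ⟨by ring, ?_, by ring, ?_⟩
  · apply mul_left_cancel₀ h3
    clear hx hy hz hw hi
    grind
  · apply mul_left_cancel₀ h3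
    clear hx hy hz hw hi
    grind
end
end TC
namespace TC
section
variable {p : ℕ} [Fact p.Prime] {a b : ZMod p}

def v1 : Option (ZMod p) → ZMod p
  | none => 0
  | some _ => 1
def v2 : Option (ZMod p) → ZMod p
  | none => 1
  | some t => t

def kills (a b : ZMod p) (t : Option (ZMod p)) (g : OQ) : Prop :=
  m11 a b g * v1 t + m12 a b g * v2 t = 0 ∧ m21 a b g * v1 t + m22 a b g * v2 t = 0

lemma kills_mul (h : a^2+a*b+b^2 = -1) (t : Option (ZMod p)) (d g : OQ) (hg : kills a b t g) : kills a b t (d * g) := by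
  obtain ⟨h1, h2⟩ := hg
  constructor
  · rw [m11_mul h, m12_mul h]
    linear_combination m11 a b d * h1 + m12 a b d * h2
  · rw [m21_mul h, m22_mul h]
    linear_combination m21 a b d * h1 + m22 a b d * h2

def idl (h : a^2+a*b+b^2 = -1) (t : Option (ZMod p)) : Submodule OQ OQ where
  carrier := {g | kills a b t g}
  zero_mem' := by simp [kills, m11, m12, m21, m22]
  add_mem' := by
    rintro x y ⟨h1, h2⟩ ⟨h3, h4⟩
    simp only [m11, m12, m21, m22] at h1 h2 h3 h4
    constructor
    · simp [m11, m12]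
      linear_combination h1 + h3
    · simp [m21, m22]
      linear_combination h2 + h4
  smul_mem' := fun c x hx => kills_mul h t c x hx

lemma det_kills (h : a^2+a*b+b^2 = -1) (t : Option (ZMod p)) (g : OQ) (hg : kills a b t g) : (p : ℤ) ∣ nQ g := by
  rw [← ZMod.intCast_zmod_eq_zero_iff_dvd, ← det_m h]
  obtain ⟨h1, h2⟩ := hg
  cases t with
  | none =>
    simp [v1, v2] at h1 h2
    simp [h1, h2]
  | some t =>
    simp only [v1, v2] at h1 h2
    linear_combination m22 a b g * h1 - m12 a b g * h2

lemma p_all (g : OQ) : m11 a b (((p:ℤ):OQ) * g) = 0 ∧ m12 a b (((p:ℤ):OQ) * g) = 0 ∧ m21 a b (((p:ℤ):OQ) * g) = 0 ∧ m22 a b (((p:ℤ):OQ) * g) = 0 := by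
  simp [m11, m12, m21, m22]

lemma gen (h : a^2+a*b+b^2 = -1) (h3 : (3 : ZMod p) ≠ 0) (t : Option (ZMod p)) :
    ∃ π : OQ, nQ π = p ∧ ∀ g, kills a b t g ↔ ∃ d, g = d * π := by
  have hp : p.Prime := Fact.out
  have hpk : ((p:ℤ):OQ) ∈ idl h t := by
    have := p_all (a := a) (b := b) (1 : OQ)
    rw [mul_one] at this
    obtain ⟨e1, e2, e3, e4⟩ := this
    constructor
    · rw [e1, e2]; ring
    · rw [e3, e4]; ring
  have hp0 : ((p:ℤ):OQ) ≠ 0 := by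
    intro e
    have := congrArg QuaternionAlgebra.re e
    simp at this
    exact hp.ne_zero this
  obtain ⟨π, h1, h2, hπ⟩ := principal (idl h t) ⟨_, hpk, hp0⟩
  have hkill : kills a b t π := h1
  refine ⟨π, ?_, fun g => ⟨fun hg => hπ g hg, ?_⟩⟩
  · obtain ⟨d, hd⟩ := hπ _ hpk
    have hn : nQ d * nQ π = (p:ℤ)^2 := by
      rw [← nQ_mul, ← hd]; simp [nQ]
    have hdv := det_kills h t π hkill
    have hdv2 : nQ π ∣ (p:ℤ)^2 := ⟨nQ d, by linarith⟩
    obtain ⟨u, hu⟩ := Int.eq_ofNat_of_zero_le (nQ_nonneg π)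
    rw [hu] at hdv hdv2 hn ⊢
    have hdv' : p ∣ u := by exact_mod_cast hdv
    have hdv2' : u ∣ p^2 := by exact_mod_cast hdv2
    obtain ⟨k, hk, rfl⟩ := (Nat.dvd_prime_pow hp).1 hdv2'
    interval_cases k
    · simp at hdv'
      exact absurd hdv' hp.ne_one
    · simp
    · exfalso
      have hpz : (p:ℤ)^2 ≠ 0 := by have := hp.ne_zero; positivity
      have hd1 : nQ d = 1 := by
        push_cast at hn
        exact mul_right_cancel₀ hpz (by linarith)
      have hpi : π = ((p:ℤ):OQ) * star d := by
        have : star d * ((p:ℤ):OQ) = π := by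
          rw [hd, ← mul_assoc, star_mul_nQ, hd1]; simp
        rw [← this, (Int.cast_commute (p:ℤ) (star d)).eq]
      obtain ⟨e, he1, he2, he3, he4⟩ := surj_m h h3 (v2 t) (-v1 t) 0 0
      have hek : kills a b t e := by
        constructor
        · rw [he1, he2]; ring
        · rw [he3, he4]; ring
      obtain ⟨f, hf⟩ := hπ e hek
      have : e = ((p:ℤ):OQ) * (f * star d) := by
        rw [hf, hpi, ← mul_assoc, ← mul_assoc, (Int.cast_commute (p:ℤ) f).eq]
      obtain ⟨e1, e2, -, -⟩ := p_all (a := a) (b := b) (f * star d)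
      rw [← this] at e1 e2
      rw [e1] at he1
      rw [e2] at he2
      cases t with
      | none => simp [v2] at he1
      | some t => simp [v1] at he2
  · rintro ⟨d, rfl⟩
    exact kills_mul h t d π hkill

lemma kills_unique (h : a^2+a*b+b^2 = -1) (g : OQ) (hg : (p:ℤ) ∣ nQ g) 
    (hne : ¬ (m11 a b g = 0 ∧ m12 a b g = 0 ∧ m21 a b g = 0 ∧ m22 a b g = 0)) : ∃! t, kills a b t g := by
  have hd := det_m h g
  rw [(ZMod.intCast_zmod_eq_zero_iff_dvd _ _).2 hg] at hd
  unfold kills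
  generalize m11 a b g = x11 at *
  generalize m12 a b g = x12 at *
  generalize m21 a b g = x21 at *
  generalize m22 a b g = x22 at *
  by_cases h12 : x12 = 0
  · by_cases h22 : x22 = 0
    · refine ⟨none, by simp [v1, v2, h12, h22], ?_⟩
      rintro (_ | t) ⟨e1, e2⟩
      · rfl
      · simp [v1, v2, h12, h22] at e1 e2
        exact absurd ⟨e1, h12, e2, h22⟩ hne
    · have h11 : x11 = 0 := by
        rw [h12] at hd
        have : x11 * x22 = 0 := by linear_combination hd
        simpa [h22] using this
      refine ⟨some (-x21/x22), ?_, ?_⟩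
      · simp [v1, v2, h12, h11]; field_simp; ring
      · rintro (_ | t) ⟨e1, e2⟩
        · simp [v1, v2, h22] at e2
        · simp [v1, v2] at e2
          congr 1
          field_simp
          linear_combination e2
  · refine ⟨some (-x11/x12), ?_, ?_⟩
    · simp only [v1, v2]
      constructor
      · field_simp; ring
      · field_simp; linear_combination -hd
    · rintro (_ | t) ⟨e1, e2⟩
      · simp [v1, v2, h12] at e1
      · simp [v1, v2] at e1
        congr 1
        field_simp
        linear_combination e1
end

lemma three_ne (p : ℕ) [Fact p.Prime] (h3 : p ≠ 3) : (3 : ZMod p) ≠ 0 := by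
  intro h
  have : ((3:ℕ) : ZMod p) = 0 := by exact_mod_cast h
  rw [ZMod.natCast_eq_zero_iff] at this
  exact h3 ((Nat.prime_dvd_prime_iff_eq Fact.out Nat.prime_three).1 this)

/-- Hecke relation. -/
lemma hecke (p : ℕ) [Fact p.Prime] (h3 : p ≠ 3) (m : ℤ) (S : Finset OQ) (hS : ∀ g, g ∈ S ↔ (p:ℤ) * nQ g = m) :
    (RF (p*m)).card + p * S.card = (p+1) * (RF m).card := by
  classical
  have hp : p.Prime := Fact.out
  have hpz : (p:ℤ) ≠ 0 := by exact_mod_cast hp.ne_zero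
  have hp0 : ((p:ℤ):OQ) ≠ 0 := by
    intro e
    have := congrArg QuaternionAlgebra.re e
    simp at this
    exact hp.ne_zero this
  obtain ⟨a, b, h⟩ := exists_ab p h3
  have h30 := three_ne p h3
  have key := Finset.sum_card_bipartiteAbove_eq_sum_card_bipartiteBelow (s := RF (p*m)) (t := (Finset.univ : Finset (Option (ZMod p))))
    (fun g t => kills a b t g)
  have hR : ∀ t ∈ (Finset.univ : Finset (Option (ZMod p))), ((RF (p*m)).bipartiteBelow (fun g t => kills a b t g) t).card = (RF m).card := by
    intro t _
    obtain ⟨π, hn, hπ⟩ := gen h h30 t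
    symm
    refine Finset.card_bij (fun d _ => d * π) ?_ ?_ ?_
    · intro d hd
      rw [mem_RF] at hd
      simp only [Finset.bipartiteBelow, Finset.mem_filter, mem_RF]
      exact ⟨by rw [nQ_mul, hd, hn, mul_comm], (hπ _).2 ⟨d, rfl⟩⟩
    · intro d _ e _ hde
      have : (d - e) * π = 0 := by rw [sub_mul]; exact sub_eq_zero.2 hde
      have h2 : nQ (d - e) * p = 0 := by rw [← hn, ← nQ_mul, this]; simp [nQ]
      exact sub_eq_zero.1 (nQ_eq_zero (by simpa [hp.ne_zero] using h2))
    · intro g hg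
      simp only [Finset.bipartiteBelow, Finset.mem_filter, mem_RF] at hg
      obtain ⟨d, rfl⟩ := (hπ g).1 hg.2
      refine ⟨d, ?_, rfl⟩
      rw [mem_RF]
      have := hg.1
      rw [nQ_mul, hn] at this
      exact mul_left_cancel₀ hpz (by linarith)
  rw [Finset.sum_congr rfl hR] at key
  simp only [Finset.sum_const, Finset.card_univ, Fintype.card_option, ZMod.card, smul_eq_mul] at key
  rw [← key]
  set Z : OQ → Prop := fun g => m11 a b g = 0 ∧ m12 a b g = 0 ∧ m21 a b g = 0 ∧ m22 a b g = 0 with hZ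
  have hL : ∀ g ∈ RF (p*m), ((Finset.univ : Finset (Option (ZMod p))).bipartiteAbove (fun g t => kills a b t g) g).card = 1 + if Z g then p else 0 := by
    intro g hg
    rw [mem_RF] at hg
    split_ifs with hz
    · obtain ⟨z1, z2, z3, z4⟩ := hz
      rw [Finset.bipartiteAbove, Finset.filter_true_of_mem]
      · simp [Finset.card_univ, ZMod.card]; ring
      · intro t _
        simp [kills, z1, z2, z3, z4]
    · rw [add_zero, Finset.card_eq_one]
      obtain ⟨t, ht, hu⟩ := kills_unique h g ⟨m, hg⟩ hz
      refine ⟨t, ?_⟩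
      ext t'
      simp only [Finset.bipartiteAbove, Finset.mem_filter, Finset.mem_univ, true_and, Finset.mem_singleton]
      exact ⟨hu t', fun e => e ▸ ht⟩
  rw [Finset.sum_congr rfl hL, Finset.sum_add_distrib, ← Finset.sum_filter]
  simp only [Finset.sum_const, smul_eq_mul, mul_one]
  rw [mul_comm p]
  congr 2
  refine Finset.card_bij (fun d _ => ((p:ℤ):OQ) * d) ?_ ?_ ?_
  · intro d hd
    rw [hS] at hd
    rw [Finset.mem_filter, mem_RF]
    refine ⟨?_, p_all d⟩
    rw [nQ_smulint, ← hd]; ring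
  · intro d _ e _ hde
    have : ((p:ℤ):OQ) * (d - e) = 0 := by rw [mul_sub]; exact sub_eq_zero.2 hde
    have h2 : (p:ℤ)^2 * nQ (d - e) = 0 := by rw [← nQ_smulint, this]; simp [nQ]
    exact sub_eq_zero.1 (nQ_eq_zero (by simpa [hp.ne_zero] using h2))
  · intro g hg
    rw [Finset.mem_filter, mem_RF] at hg
    obtain ⟨h1, z1, z2, z3, z4⟩ := hg
    obtain ⟨d, rfl⟩ := ker_m h h30 g z1 z2 z3 z4
    refine ⟨d, ?_, rfl⟩
    rw [hS]
    rw [nQ_smulint] at h1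
    exact mul_left_cancel₀ hpz (by linarith)

lemma RF_one : (RF 1).card = 12 := by
  classical
  let B : Finset (ℤ × ℤ × ℤ × ℤ) := (Finset.Icc (-1) 1 ×ˢ Finset.Icc (-1) 1 ×ˢ Finset.Icc (-1) 1 ×ˢ Finset.Icc (-1) 1).filter
    (fun x => x.1^2 - x.1*x.2.1 + x.2.1^2 + x.2.2.1^2 - x.2.2.1*x.2.2.2+x.2.2.2^2 = 1)
  have hB : B.card = 12 := by decide +kernel
  rw [← hB]
  refine Finset.card_bij (fun g _ => (g.re, g.imI, g.imJ, g.imK)) ?_ ?_ ?_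
  · intro g hg
    rw [mem_RF] at hg
    have hb : g.re^2 ≤ 1 ∧ g.imI^2 ≤ 1 ∧ g.imJ^2 ≤ 1 ∧ g.imK^2 ≤ 1 := by
      have e := hg
      unfold nQ at e
      have key : ∀ x : ℤ, 3 * x^2 ≤ 4 → x^2 ≤ 1 := fun x hx => by omega
      refine ⟨?_, ?_, ?_, ?_⟩ <;> apply key <;>
      nlinarith [sq_nonneg (2*g.re - g.imI), sq_nonneg (2*g.imJ - g.imK), sq_nonneg g.imI, sq_nonneg g.imK,
        sq_nonneg (2*g.imI - g.re), sq_nonneg (2*g.imK - g.imJ), sq_nonneg g.re, sq_nonneg g.imJ]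
    have key2 : ∀ x : ℤ, x^2 ≤ 1 → -1 ≤ x ∧ x ≤ 1 := fun x hx => by constructor <;> nlinarith
    simp only [B, Finset.mem_filter, Finset.mem_product, Finset.mem_Icc]
    exact ⟨⟨key2 _ hb.1, key2 _ hb.2.1, key2 _ hb.2.2.1, key2 _ hb.2.2.2⟩, hg⟩
  · intro g _ h _ e
    simp only [Prod.mk.injEq] at e
    ext <;> simp [e]
  · rintro ⟨x, y, z, w⟩ hx
    simp only [B, Finset.mem_filter] at hx
    exact ⟨⟨x,y,z,w⟩, mem_RF.2 hx.2, rfl⟩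

open ArithmeticFunction in
lemma sig_rec (p k m : ℕ) (hp : p.Prime) (hm : p.Coprime m) :
    sigma 1 (p^(k+2) * m) + p * sigma 1 (p^k*m) = (p+1) * sigma 1 (p^(k+1) * m) := by
  rw [isMultiplicative_sigma.map_mul_of_coprime (Nat.Coprime.pow_left _ hm), isMultiplicative_sigma.map_mul_of_coprime (Nat.Coprime.pow_left _ hm),
    isMultiplicative_sigma.map_mul_of_coprime (Nat.Coprime.pow_left _ hm), sigma_one_apply_prime_pow hp, sigma_one_apply_prime_pow hp, sigma_one_apply_prime_pow hp]
  have e : ∑ j ∈ Finset.range (k+2+1), p^j = ∑ j ∈ Finset.range (k+1+1), p^j + p^(k+2) := Finset.sum_range_succ _ _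
  have e2 : ∑ j ∈ Finset.range (k+1+1), p^j = ∑ j ∈ Finset.range (k+1), p^j + p^(k+1) := Finset.sum_range_succ _ _
  rw [e, e2]; ring

open ArithmeticFunction in
lemma RF_card_aux (p m : ℕ) (hp : p.Prime) (h3 : p ≠ 3) (hm : p.Coprime m) (h : (RF m).card = 12 * sigma 1 m) (k : ℕ) :
    (RF ((p^k*m : ℕ))).card = 12 * sigma 1 (p^k*m) ∧ (RF ((p^(k+1)*m : ℕ))).card = 12 * sigma 1 (p^(k+1)*m) := by
  have := Fact.mk hp
  induction k with
  | zero =>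
    refine ⟨by simpa using h, ?_⟩
    have := hecke p h3 m ∅ (by
      intro g
      simp only [Finset.notMem_empty, false_iff]
      intro e
      have : (p:ℤ) ∣ m := ⟨_, e.symm⟩
      exact (Nat.Prime.coprime_iff_not_dvd hp).1 hm (by exact_mod_cast this))
    simp only [zero_add, pow_one, Nat.cast_mul]
    rw [isMultiplicative_sigma.map_mul_of_coprime hm, show sigma 1 p = p+1 by
      have := sigma_one_apply_prime_pow (p := p) (i := 1) hp
      simpa [Finset.sum_range_succ, add_comm] using this]
    simp only [Finset.card_empty, mul_zero, add_zero] at this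
    rw [this, h]; ring
  | succ k ih =>
    refine ⟨ih.2, ?_⟩
    have := hecke p h3 ((p^(k+1)*m : ℕ)) (RF ((p^k*m : ℕ))) (by
      intro g
      rw [mem_RF]
      have hpz : (p:ℤ) ≠ 0 := by exact_mod_cast hp.ne_zero
      constructor
      · intro e; rw [e]; push_cast; ring
      · intro e; apply mul_left_cancel₀ hpz; rw [e]; push_cast; ring)
    rw [ih.1, ih.2] at this
    rw [show (p:ℤ) * ((p^(k+1)*m : ℕ)) = ((p^(k+1+1)*m : ℕ)) by push_cast; ring] at this
    have s := sig_rec p k m hp hm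
    rw [show k+1+1 = k+2 from rfl] at *
    nlinarith

open ArithmeticFunction in
lemma RF_card (m : ℕ) (hm : m ≠ 0) (h3 : ¬ 3 ∣ m) : (RF m).card = 12 * sigma 1 m := by
  induction m using Nat.recOnPrimePow with
  | zero => exact absurd rfl hm
  | one => simpa using RF_one
  | prime_pow_mul a p n hp hpa hn ih =>
    obtain ⟨n, rfl⟩ : ∃ k, n = k + 1 := ⟨n-1, by omega⟩
    refine (RF_card_aux p a hp ?_ ((Nat.Prime.coprime_iff_not_dvd hp).2 hpa) (ih (by rintro rfl; simp at hm) ?_) n).2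
    · rintro rfl
      exact h3 (Dvd.dvd.mul_right (dvd_pow_self 3 (by omega)) _)
    · exact fun h => h3 (Dvd.dvd.mul_left h _)
end TC
namespace TC
open YoungDiagram

lemma cell_iff (μ : YoungDiagram) (i j : ℕ) : j < μ.rowLen i ↔ i < μ.colLen j := by
  rw [← mem_iff_lt_rowLen, ← mem_iff_lt_colLen]

def xs (μ : YoungDiagram) : Finset ℕ :=
  (Finset.range (μ.colLen 0)).image (fun i => μ.rowLen i + (μ.colLen 0 - 1 - i))

lemma mem_xs {μ : YoungDiagram} {x : ℕ} : x ∈ xs μ ↔ ∃ i < μ.colLen 0, μ.rowLen i + (μ.colLen 0 - 1 - i) = x := by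
  simp [xs]

lemma xs_injOn (μ : YoungDiagram) : Set.InjOn (fun i => μ.rowLen i + (μ.colLen 0 - 1 - i)) (Finset.range (μ.colLen 0)) := by
  intro i hi j hj e
  simp only [Finset.coe_range, Set.mem_Iio] at hi hj e
  rcases lt_trichotomy i j with h | h | h
  · have := μ.rowLen_anti i j h.le; omega
  · exact h
  · have := μ.rowLen_anti j i h.le; omega

lemma card_xs (μ : YoungDiagram) : (xs μ).card = μ.colLen 0 := by
  rw [xs, Finset.card_image_of_injOn (xs_injOn μ), Finset.card_range]

lemma compl_xs (μ : YoungDiagram) (y : ℕ) : y ∉ xs μ ↔ ∃ j, y + μ.colLen j = j + μ.colLen 0 := by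
  constructor
  · intro hy
    have hex : ∃ i, μ.colLen 0 ≤ i ∨ μ.rowLen i + (μ.colLen 0 - 1 - i) ≤ y := ⟨_, Or.inl le_rfl⟩
    classical
    have h1 := Nat.find_spec hex
    have h2 : Nat.find hex ≤ μ.colLen 0 := Nat.find_min' hex (Or.inl le_rfl)
    have h3 : ∀ m < Nat.find hex, _ := fun m hm => Nat.find_min hex hm
    generalize Nat.find hex = i at *
    have hc := cell_iff μ i 0
    have h4 : i < μ.colLen 0 → μ.rowLen i + (μ.colLen 0 - 1 - i) ≠ y := fun hi e => hy (mem_xs.2 ⟨i, hi, e⟩)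
    have hki : μ.colLen 0 ≤ y + i := by omega
    refine ⟨y + i - μ.colLen 0, ?_⟩
    set j := y + i - μ.colLen 0 with hj
    have h5 : ¬ (i < μ.colLen j) := by
      rw [← cell_iff]; omega
    rcases Nat.eq_zero_or_pos i with h0 | h0
    · omega
    · have h6 := h3 (i-1) (by omega)
      have h7 : i - 1 < μ.colLen j := by
        rw [← cell_iff]; omega
      omega
  · rintro ⟨j, hj⟩ hy
    obtain ⟨i, hi, e⟩ := mem_xs.1 hy
    have := cell_iff μ i j
    omega

lemma core_iff (μ : YoungDiagram) : μ.IsThreeCore ↔ ∀ x ∈ xs μ, ∀ y ∉ xs μ, y < x → ¬ 3 ∣ x - y := by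
  constructor
  · intro h x hx y hy hyx
    obtain ⟨i, hi, e⟩ := mem_xs.1 hx
    obtain ⟨j, hj⟩ := (compl_xs μ y).1 hy
    have hc := cell_iff μ i j
    have hcell : j < μ.rowLen i := by omega
    have := h (i, j) (by rw [mem_cells, mem_iff_lt_rowLen]; exact hcell)
    unfold hookLength at this
    rwa [show x - y = μ.rowLen i + μ.colLen j - i - j - 1 by omega]
  · rintro h ⟨i, j⟩ hc
    rw [mem_cells, mem_iff_lt_rowLen] at hc
    have h2 := (cell_iff μ i j).1 hc
    have h3 := (cell_iff μ i 0).1 (by omega)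
    have h4 := μ.colLen_anti 0 j (by omega)
    have := h _ (mem_xs.2 ⟨i, h3, rfl⟩) (j + μ.colLen 0 - μ.colLen j) ((compl_xs μ _).2 ⟨j, by omega⟩) (by omega)
    unfold hookLength
    rwa [show μ.rowLen i + (μ.colLen 0 - 1 - i) - (j + μ.colLen 0 - μ.colLen j) = μ.rowLen i + μ.colLen j - i - j - 1 by omega] at this

lemma ext_rowLen {μ ν : YoungDiagram} (h : ∀ i, μ.rowLen i = ν.rowLen i) : μ = ν := by
  ext ⟨i, j⟩
  rw [mem_cells, mem_cells, mem_iff_lt_rowLen, mem_iff_lt_rowLen, h]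

lemma xs_inj {μ ν : YoungDiagram} (h : xs μ = xs ν) : μ = ν := by
  have hk : μ.colLen 0 = ν.colLen 0 := by rw [← card_xs, ← card_xs, h]
  have key : ∀ (τ : YoungDiagram) (k : ℕ) (hk : τ.colLen 0 = k) (hX : (xs τ).card = k),
      (fun m : Fin k => τ.rowLen (k - 1 - m) + m) = (xs τ).orderEmbOfFin hX := by
    intro τ k hk hX
    apply Finset.orderEmbOfFin_unique
    · intro m
      have := m.2
      exact mem_xs.2 ⟨k-1-m, by omega, by rw [hk]; omega⟩
    · intro m m' hmm
      have h1 : (m:ℕ) < m' := hmm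
      have := τ.rowLen_anti (k-1-m') (k-1-m) (by omega)
      simp only
      omega
  have e1 := key μ _ rfl (card_xs μ)
  have e2 := key ν (μ.colLen 0) hk.symm (by rw [← h, card_xs])
  have e3 : (fun m : Fin (μ.colLen 0) => μ.rowLen (μ.colLen 0 - 1 - m) + m) = (fun m : Fin (μ.colLen 0) => ν.rowLen (μ.colLen 0 - 1 - m) + m) := by
    rw [e1, e2]; simp only [h]
  apply ext_rowLen
  intro i
  by_cases hi : i < μ.colLen 0
  · have := congrFun e3 ⟨μ.colLen 0 - 1 - i, by omega⟩
    simp only at this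
    rw [show μ.colLen 0 - 1 - (μ.colLen 0 - 1 - i) = i by omega] at this
    omega
  · have h1 := cell_iff μ i 0
    have h2 := cell_iff ν i 0
    omega

def mkD (r : ℕ → ℕ) (k : ℕ) (hr : Antitone r) : YoungDiagram where
  cells := (Finset.range k ×ˢ Finset.range (r 0)).filter (fun c => c.2 < r c.1)
  isLowerSet := by
    rintro ⟨i, j⟩ ⟨i', j'⟩ ⟨h1, h2⟩ h
    simp only [Finset.coe_filter, Finset.mem_product, Finset.mem_range, Set.mem_ofPred_eq] at h ⊢
    simp only at h1 h2
    have := hr h1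
    omega

lemma rowLen_mkD (r : ℕ → ℕ) (k : ℕ) (hr : Antitone r) (hk : r k = 0) (i : ℕ) : (mkD r k hr).rowLen i = r i := by
  apply eq_of_forall_lt_iff
  intro j
  rw [← mem_iff_lt_rowLen, ← mem_cells]
  simp only [mkD, Finset.mem_filter, Finset.mem_product, Finset.mem_range]
  have := hr (Nat.zero_le i)
  have h2 : k ≤ i → r i ≤ r k := fun h => hr h
  omega

lemma exists_xs (X : Finset ℕ) (h0 : 0 ∉ X) : ∃ μ, xs μ = X := by
  set k := X.card with hk
  set e := X.orderEmbOfFin hk.symm with he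
  have hpos : ∀ m (h : m < k), m + 1 ≤ e ⟨m, h⟩ := by
    intro m
    induction m with
    | zero =>
      intro h
      have : e ⟨0, h⟩ ∈ X := Finset.orderEmbOfFin_mem _ _ _
      have : e ⟨0, h⟩ ≠ 0 := fun e => h0 (e ▸ this)
      omega
    | succ m ih =>
      intro h
      have h1 := ih (by omega)
      have : e ⟨m, by omega⟩ < e ⟨m+1, h⟩ := e.strictMono (by simp)
      omega
  let r : ℕ → ℕ := fun i => if h : i < k then e ⟨k-1-i, by omega⟩ - (k-1-i) else 0
  have hr : Antitone r := by
    apply antitone_nat_of_succ_le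
    intro i
    by_cases h : i + 1 < k
    · simp only [r, dif_pos h, dif_pos (show i < k by omega)]
      have : e ⟨k-1-(i+1), by omega⟩ < e ⟨k-1-i, by omega⟩ := e.strictMono (by rw [Fin.mk_lt_mk]; omega)
      omega
    · simp only [r, dif_neg h]; omega
  have hrk : r k = 0 := by simp [r]
  have hrow := rowLen_mkD r k hr hrk
  have hcol : (mkD r k hr).colLen 0 = k := by
    apply eq_of_forall_lt_iff
    intro i
    rw [← cell_iff, hrow]
    by_cases h : i < k
    · simp only [r, dif_pos h, h, iff_true]
      have := hpos (k-1-i) (by omega)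
      omega
    · simp [r, h]
  refine ⟨mkD r k hr, ?_⟩
  apply Finset.eq_of_subset_of_card_le
  · intro x hx
    obtain ⟨i, hi, rfl⟩ := mem_xs.1 hx
    rw [hcol] at hi ⊢
    rw [hrow]
    simp only [r, dif_pos hi]
    have h1 := hpos (k-1-i) (by omega)
    rw [Nat.sub_add_cancel (by omega)]
    exact Finset.orderEmbOfFin_mem _ _ _
  · rw [card_xs, hcol]

lemma card_eq (μ : YoungDiagram) : μ.card + ∑ i ∈ Finset.range (xs μ).card, i = ∑ x ∈ xs μ, x := by
  rw [card_xs, xs, Finset.sum_image (xs_injOn μ), Finset.sum_add_distrib, Finset.sum_range_reflect (fun i => i)]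
  congr 1
  rw [YoungDiagram.card, Finset.card_eq_sum_card_fiberwise (f := Prod.fst) (t := Finset.range (μ.colLen 0))]
  · apply Finset.sum_congr rfl
    intro i _
    rw [rowLen_eq_card]
    rfl
  · rintro ⟨i, j⟩ h
    have h : (i, j) ∈ μ := h
    rw [mem_iff_lt_rowLen] at h
    simp only [Finset.coe_range, Set.mem_Iio]
    rw [← cell_iff]; omega

lemma zero_notMem (μ : YoungDiagram) : 0 ∉ xs μ := (compl_xs μ 0).2 ⟨0, by omega⟩

def Xab (a b : ℕ) : Finset ℕ := (Finset.range a).image (fun q => 3*q+1) ∪ (Finset.range b).image (fun q => 3*q+2)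

lemma mem_Xab {a b x : ℕ} : x ∈ Xab a b ↔ (x % 3 = 1 ∧ x < 3*a+1) ∨ (x % 3 = 2 ∧ x < 3*b+2) := by
  simp only [Xab, Finset.mem_union, Finset.mem_image, Finset.mem_range]
  constructor
  · rintro (⟨q, h, rfl⟩ | ⟨q, h, rfl⟩) <;> omega
  · rintro (h | h)
    · exact Or.inl ⟨x/3, by omega, by omega⟩
    · exact Or.inr ⟨x/3, by omega, by omega⟩

lemma Xab_disj (a b : ℕ) : Disjoint ((Finset.range a).image (fun q => 3*q+1)) ((Finset.range b).image (fun q => 3*q+2)) := by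
  rw [Finset.disjoint_left]
  intro x hx hy
  simp only [Finset.mem_image] at hx hy
  omega

lemma card_Xab (a b : ℕ) : (Xab a b).card = a + b := by
  rw [Xab, Finset.card_union_of_disjoint (Xab_disj a b), Finset.card_image_of_injective _ (fun x y h => by simpa using h),
    Finset.card_image_of_injective _ (fun x y h => by simpa using h)]
  simp

lemma gauss (n : ℕ) : 2 * ∑ i ∈ Finset.range n, i + n = n^2 := by
  induction n with
  | zero => simp
  | succ n ih => rw [Finset.sum_range_succ]; nlinarith

lemma sum_Xab (a b : ℕ) : 2 * ∑ x ∈ Xab a b, x + a = 3 * a^2 + 3*b^2 + b := by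
  rw [Xab, Finset.sum_union (Xab_disj a b), Finset.sum_image (fun x _ y _ h => by simpa using h), Finset.sum_image (fun x _ y _ h => by simpa using h)]
  rw [Finset.sum_add_distrib, Finset.sum_add_distrib, ← Finset.mul_sum, ← Finset.mul_sum]
  simp only [Finset.sum_const, Finset.card_range, smul_eq_mul]
  have := gauss a
  have := gauss b
  omega

lemma down (P : ℕ → Prop) (h : ∀ q, P (q+1) → P q) (hn : ∃ q, ¬ P q) : ∃ a, ∀ q, P q ↔ q < a := by
  classical
  refine ⟨Nat.find hn, fun q => ⟨fun hq => ?_, fun hq => not_not.1 (Nat.find_min hn hq)⟩⟩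
  by_contra hlt
  have : ∀ d, ¬ P (Nat.find hn + d) := by
    intro d
    induction d with
    | zero => exact Nat.find_spec hn
    | succ d ih => exact fun hp => ih (h _ hp)
  exact this (q - Nat.find hn) (by rwa [Nat.add_sub_cancel' (by omega)])

lemma core_xs (μ : YoungDiagram) : μ.IsThreeCore ↔ ∃ a b, xs μ = Xab a b := by
  rw [core_iff]
  constructor
  · intro h
    have h0 := zero_notMem μ
    have hcl : ∀ x, x + 3 ∈ xs μ → x ∈ xs μ := by
      intro x hx
      by_contra hn
      exact h _ hx x hn (by omega) (by simp)
    have hfin : ∀ c, ∃ q, ¬ (3*q + c ∈ xs μ) := by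
      intro c
      refine ⟨(xs μ).sup id + 1, fun hm => ?_⟩
      have := Finset.le_sup (f := id) hm
      simp only [id] at this
      omega
    obtain ⟨a, ha⟩ := down (fun q => 3*q+1 ∈ xs μ) (fun q hq => hcl _ (by rwa [show 3*q+1+3 = 3*(q+1)+1 by ring])) (hfin 1)
    obtain ⟨b, hb⟩ := down (fun q => 3*q+2 ∈ xs μ) (fun q hq => hcl _ (by rwa [show 3*q+2+3 = 3*(q+1)+2 by ring])) (hfin 2)
    refine ⟨a, b, ?_⟩
    ext x
    rw [mem_Xab]
    have h3 : x % 3 = 0 ∨ x % 3 = 1 ∨ x % 3 = 2 := by omega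
    rcases h3 with h3 | h3 | h3
    · have : x ∉ xs μ := by
        intro hx
        rcases Nat.eq_zero_or_pos x with rfl | hp
        · exact h0 hx
        · exact h x hx 0 h0 hp (by omega)
      simp only [this, false_iff]; omega
    · have := ha (x/3)
      rw [show 3*(x/3)+1 = x by omega] at this
      rw [this]; omega
    · have := hb (x/3)
      rw [show 3*(x/3)+2 = x by omega] at this
      rw [this]; omega
  · rintro ⟨a, b, e⟩ x hx y hy hxy
    rw [e, mem_Xab] at hx hy
    omega

theorem core_param : ∃ G : ℕ × ℕ → YoungDiagram, Function.Injective G ∧ (∀ μ : YoungDiagram, μ.IsThreeCore ↔ ∃ x, G x = μ) ∧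
    ∀ x : ℕ × ℕ, (G x).card + x.1 * x.2 = x.1^2 + x.2^2 + x.2 := by
  have hex : ∀ x : ℕ × ℕ, ∃ μ, xs μ = Xab x.1 x.2 := fun x => exists_xs _ (by rw [mem_Xab]; omega)
  choose G hG using hex
  refine ⟨G, ?_, ?_, ?_⟩
  · rintro ⟨a, b⟩ ⟨c, d⟩ h
    have e : Xab a b = Xab c d := by rw [← hG (a,b), ← hG (c,d), h]
    have h1 : ∀ x, x ∈ Xab a b ↔ x ∈ Xab c d := fun x => by rw [e]
    simp only [mem_Xab] at h1
    have e1 := h1 (3*a+1)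
    have e2 := h1 (3*c+1)
    have e3 := h1 (3*b+2)
    have e4 := h1 (3*d+2)
    simp only [Prod.mk.injEq]
    omega
  · intro μ
    rw [core_xs]
    constructor
    · rintro ⟨a, b, h⟩
      exact ⟨(a, b), xs_inj ((hG _).trans h.symm)⟩
    · rintro ⟨x, rfl⟩
      exact ⟨_, _, hG x⟩
  · rintro ⟨a, b⟩
    have h1 := card_eq (G (a,b))
    rw [hG, card_Xab] at h1
    have h2 := sum_Xab a b
    have h3 := gauss (a+b)
    simp only at *
    nlinarith
end TC
namespace TC
def unitAct (k : Fin 6) (X Y : ℤ) : ℤ × ℤ := 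
  if k = 0 then (X, Y) else if k = 1 then (-Y, X-Y) else if k = 2 then (Y-X, -X) else
  if k = 3 then (-X, -Y) else if k = 4 then (Y, Y-X) else (X-Y, X)

def sec (x : ℕ × ℕ) (k : Fin 6) : ℤ × ℤ := unitAct k ((x.1:ℤ) - 2*x.2 - 1) (2*x.1 - x.2)

lemma unitAct_norm (k : Fin 6) (X Y : ℤ) : (unitAct k X Y).1^2 - (unitAct k X Y).1 * (unitAct k X Y).2 + (unitAct k X Y).2^2 = X^2 - X*Y+Y^2 := by
  fin_cases k <;> simp [unitAct] <;> ring

lemma sec_norm (x : ℕ × ℕ) (k : Fin 6) (c : ℕ) (h : c + x.1 * x.2 = x.1^2 + x.2^2 + x.2) :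
    (sec x k).1^2 - (sec x k).1 * (sec x k).2 + (sec x k).2^2 = 3 * c + 1 := by
  rw [sec, unitAct_norm]
  have h' : (c:ℤ) + x.1 * x.2 = x.1^2 + x.2^2 + x.2 := by exact_mod_cast h
  linear_combination -3 * h'

lemma sec_inj (x y : ℕ × ℕ) (k l : Fin 6) (h : sec x k = sec y l) : x = y ∧ k = l := by
  obtain ⟨a, b⟩ := x
  obtain ⟨c, d⟩ := y
  fin_cases k <;> fin_cases l <;> simp [sec, unitAct] at h ⊢ <;> omega

lemma sec_surj (X Y : ℤ) (h : ¬ 3 ∣ X + Y) : ∃ x k, sec x k = (X, Y) := by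
  have key : ∀ U V : ℤ, (U + V) % 3 = 2 → 0 ≤ 2*V-U → 0 ≤ V - 2*U → ∃ x : ℕ × ℕ, (x.1:ℤ) - 2*x.2 - 1 = U ∧ (2*x.1 - x.2 : ℤ) = V := by
    intro U V h1 h2 h3
    refine ⟨(((2*V-U-1)/3).toNat, ((V-2*U-2)/3).toNat), ?_, ?_⟩ <;> simp only <;> omega
  have hc : ((X + Y) % 3 = 2 ∧ 0 ≤ 2*Y-X ∧ 0 ≤ Y - 2*X) ∨
      ((Y-X + -X) % 3 = 2 ∧ 0 ≤ 2*(-X)-(Y-X) ∧ 0 ≤ (-X) - 2*(Y-X)) ∨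
      ((-Y + (X-Y)) % 3 = 2 ∧ 0 ≤ 2*(X-Y)-(-Y) ∧ 0 ≤ (X-Y) - 2*(-Y)) ∨
      ((-X + -Y) % 3 = 2 ∧ 0 ≤ 2*(-Y)-(-X) ∧ 0 ≤ (-Y) - 2*(-X)) ∨
      ((X-Y + X) % 3 = 2 ∧ 0 ≤ 2*X-(X-Y) ∧ 0 ≤ X - 2*(X-Y)) ∨
      ((Y + (Y-X)) % 3 = 2 ∧ 0 ≤ 2*(Y-X)-Y ∧ 0 ≤ (Y-X) - 2*Y) := by
    obtain ⟨q, hq | hq⟩ : ∃ q, X = 3*q+1-Y ∨ X = 3*q+2-Y := ⟨(X+Y)/3, by omega⟩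
    all_goals
      subst hq
      rcases lt_or_ge (Y - q) 1 with h1 | h1 <;> rcases lt_or_ge (Y-2*q) 1 with h2 | h2 <;> rcases lt_or_ge q 0 with h4 | h4 <;> omega
  rcases hc with hc | hc | hc | hc | hc | hc <;> obtain ⟨x, h1, h2⟩ := key _ _ hc.1 hc.2.1 hc.2.2
  · exact ⟨x, 0, by rw [sec, h1, h2]; simp [unitAct]⟩
  · exact ⟨x, 1, by rw [sec, h1, h2]; simp [unitAct]⟩
  · exact ⟨x, 2, by rw [sec, h1, h2]; simp [unitAct]⟩
  · exact ⟨x, 3, by rw [sec, h1, h2]; simp [unitAct]⟩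
  · exact ⟨x, 4, by rw [sec, h1, h2]; simp [unitAct]⟩
  · exact ⟨x, 5, by rw [sec, h1, h2]; simp [unitAct]⟩

lemma sq3 (s : ℤ) : (3 ∣ s ∧ ∃ w, s^2 = 3*w) ∨ (¬ 3 ∣ s ∧ ∃ w, s^2 = 3*w+1) := by
  have hs : s = 3*(s/3) ∨ s = 3*(s/3)+1 ∨ s = 3*(s/3)+2 := by omega
  generalize s/3 = u at hs
  rcases hs with h | h | h
  · exact Or.inl ⟨⟨u, h⟩, 3*u^2, by rw [h]; ring⟩
  · exact Or.inr ⟨by omega, 3*u^2+2*u, by rw [h]; ring⟩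
  · exact Or.inr ⟨by omega, 3*u^2+4*u+1, by rw [h]; ring⟩

lemma two_mod (x y z w n : ℤ) (h : x^2 - x*y + y^2 + z^2 - z*w + w^2 = 3*n+2) : ¬ 3 ∣ x + y ∧ ¬ 3 ∣ z + w := by
  have e : (x+y)^2 + (z+w)^2 = 3*(n + x*y + z*w) + 2 := by linear_combination h
  generalize x*y = xy at e
  generalize z*w = zw at e
  rcases sq3 (x+y) with ⟨h1, u, h2⟩ | ⟨h1, u, h2⟩
  · rcases sq3 (z+w) with ⟨h3, v, h4⟩ | ⟨h3, v, h4⟩ <;> rw [h2, h4] at e <;> omega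
  · rcases sq3 (z+w) with ⟨h3, v, h4⟩ | ⟨h3, v, h4⟩
    · rw [h2, h4] at e; omega
    · exact ⟨h1, h3⟩

lemma A3_count (n : ℕ) : (RF ((3*n+2 : ℕ))).card = 36 * A3 n := by
  obtain ⟨G, hinj, hcore, hcard⟩ := core_param
  let T := {x : (ℕ × ℕ) × (ℕ × ℕ) // (G x.1).card + (G x.2).card = n}
  have hA : Nat.card T = A3 n := by
    refine Nat.card_eq_of_bijective (fun x : T => (⟨(G x.1.1, G x.1.2), x.2, (hcore _).2 ⟨_, rfl⟩, (hcore _).2 ⟨_, rfl⟩⟩ : {p : YoungDiagram × YoungDiagram //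
      p.1.card + p.2.card = n ∧ p.1.IsThreeCore ∧ p.2.IsThreeCore})) ⟨?_, ?_⟩
    · rintro ⟨⟨x, y⟩, h⟩ ⟨⟨x', y'⟩, h'⟩ e
      simp only [Subtype.mk.injEq, Prod.mk.injEq] at e ⊢
      exact Subtype.ext (Prod.ext (hinj e.1) (hinj e.2))
    · rintro ⟨⟨μ, ν⟩, h1, h2, h3⟩
      obtain ⟨x, rfl⟩ := (hcore _).1 h2
      obtain ⟨y, rfl⟩ := (hcore _).1 h3
      exact ⟨⟨(x, y), h1⟩, rfl⟩
  have hB : Nat.card (T × Fin 6 × Fin 6) = Nat.card (RF ((3*n+2 : ℕ))) := by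
    refine Nat.card_eq_of_bijective (fun x => ⟨⟨(sec x.1.1.1 x.2.1).1, (sec x.1.1.1 x.2.1).2, (sec x.1.1.2 x.2.2).1, (sec x.1.1.2 x.2.2).2⟩, ?_⟩) ⟨?_, ?_⟩
    · rw [mem_RF]
      have h1 := sec_norm x.1.1.1 x.2.1 _ (hcard _)
      have h2 := sec_norm x.1.1.2 x.2.2 _ (hcard _)
      have h3 : ((G x.1.1.1).card : ℤ) + (G x.1.1.2).card = n := by exact_mod_cast x.1.2
      simp only [nQ]
      push_cast
      linear_combination h1 + h2 + 3 * h3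
    · rintro ⟨⟨⟨x, y⟩, h⟩, k, l⟩ ⟨⟨⟨x', y'⟩, h'⟩, k', l'⟩ e
      simp only [Subtype.mk.injEq, QuaternionAlgebra.mk.injEq] at e
      obtain ⟨e1, e2, e3, e4⟩ := e
      obtain ⟨rfl, rfl⟩ := sec_inj _ _ _ _ (Prod.ext e1 e2)
      obtain ⟨rfl, rfl⟩ := sec_inj _ _ _ _ (Prod.ext e3 e4)
      rfl
    · rintro ⟨⟨x, y, z, w⟩, hg⟩
      rw [mem_RF] at hg
      simp only [nQ] at hg
      push_cast at hg
      obtain ⟨h1, h2⟩ := two_mod x y z w n hg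
      obtain ⟨u, k, hu⟩ := sec_surj x y h1
      obtain ⟨v, l, hv⟩ := sec_surj z w h2
      have n1 := sec_norm u k _ (hcard _)
      have n2 := sec_norm v l _ (hcard _)
      rw [hu] at n1
      rw [hv] at n2
      simp only at n1 n2
      refine ⟨⟨⟨(u, v), ?_⟩, k, l⟩, ?_⟩
      · simp only
        omega
      · simp only [hu, hv]
  rw [Nat.card_prod, Nat.card_prod, hA] at hB
  simp only [Nat.card_eq_fintype_card, Fintype.card_fin, Fintype.card_coe] at hB
  omega

open ArithmeticFunction in
lemma A3_sigma (n : ℕ) : 3 * A3 n = sigma 1 (3*n+2) := by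
  have h1 := A3_count n
  have h2 := RF_card (3*n+2) (by omega) (by omega)
  omega
end TC

open ArithmeticFunction in
theorem A3_explicit (n s : ℕ) (p : Fin s → ℕ) (α : Fin s → ℕ)
    (hp : ∀ i, (p i).Prime) (hinj : Function.Injective p)
    (hα : ∀ i, 1 ≤ α i) (hfac : 3 * n + 2 = ∏ i, p i ^ α i) :
    3 * A3 n * ∏ i, (p i - 1) = ∏ i, (p i ^ (α i + 1) - 1) := by
  rw [TC.A3_sigma, hfac, isMultiplicative_sigma.map_prod, ← Finset.prod_mul_distrib]
  · apply Finset.prod_congr rfl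
    intro i _
    rw [sigma_one_apply_prime_pow (hp i)]
    exact geom_sum_mul_of_one_le (hp i).one_le _
  · intro i _ j _ hij
    exact Nat.Coprime.pow _ _ ((Nat.coprime_primes (hp i) (hp j)).2 (fun e => hij (hinj e)))
end
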